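/- arXiv:2406.06231 — 10 statements merged into one kernel-verified Lean document; each statement's English description precedes it below -/
import Mathlib

section
/- Assume p(θ) is a proper prior, and that there exists a sequence of axis-aligned rectangles R_{n0} such that p_{n0} := P(s ∈ R_{n0} | n = n0) satisfies p_{n0} > 0 and KS_{n0}/p_{n0} → 0, where KS_{n0} = KS(p(s,θ | n = n0), p(s,θ | n_dp = n0)). Suppose further that there exist b' > 0, a sequence θ_{n0}, and a random variable Y with continuous cdf F_Y such that n0^{b'}(θ − θ_{n0}) conditional on (n = n0, s ∈ R_{n0}) converges in distribution to Y. Then n0^{b'}(θ − θ_{n0}) conditional on (n_dp = n0, s ∈ R_{n0}) also converges in distribution to Y. -/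
open MeasureTheory Filter Topology Asymptotics
open scoped ENNReal

noncomputable def tvDist {α : Type*} [MeasurableSpace α] (P Q : Measure α) : ℝ :=
  ⨆ S : {S : Set α // MeasurableSet S}, |(P S.1).toReal - (Q S.1).toReal|

def IsRect {d : ℕ} (R : Set (Fin d → ℝ)) : Prop :=
  ∃ I : Fin d → Set ℝ, (∀ i, (I i).OrdConnected) ∧ R = Set.univ.pi I

noncomputable def ksDist {d : ℕ} (P Q : Measure (Fin d → ℝ)) : ℝ :=
  ⨆ R : {R : Set (Fin d → ℝ) // IsRect R}, |(P R.1).toReal - (Q R.1).toReal|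

def IsRectProd {p d : ℕ} (R : Set ((Fin p → ℝ) × (Fin d → ℝ))) : Prop :=
  ∃ A B, IsRect A ∧ IsRect B ∧ R = A ×ˢ B

noncomputable def ksDistProd {p d : ℕ} (P Q : Measure ((Fin p → ℝ) × (Fin d → ℝ))) : ℝ :=
  ⨆ R : {R : Set ((Fin p → ℝ) × (Fin d → ℝ)) // IsRectProd R}, |(P R.1).toReal - (Q R.1).toReal|

def TendstoInDist {ι α : Type*} [MeasurableSpace α] [TopologicalSpace α]
    (l : Filter ι) (μ : ι → Measure α) (ν : Measure α) : Prop :=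
  ∀ f : BoundedContinuousFunction α ℝ,
    Tendsto (fun n => ∫ x, f x ∂(μ n)) l (𝓝 (∫ x, f x ∂ν))

noncomputable def scaleShift {d : ℕ} (b a : ℝ) (m : ℝ) (c : Fin d → ℝ) :
    (Fin d → ℝ) → (Fin d → ℝ) :=
  fun s => m ^ b • (m ^ (-a) • s - c)

noncomputable def mcdf {d : ℕ} (μ : Measure (Fin d → ℝ)) (t : Fin d → ℝ) : ℝ :=
  (μ {x | ∀ i, x i ≤ t i}).toReal


theorem IsRect.measurableSet' {d : ℕ} {R : Set (Fin d → ℝ)} (h : IsRect R) : MeasurableSet R := by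
  obtain ⟨I, hI, rfl⟩ := h
  exact MeasurableSet.univ_pi fun i => (hI i).measurableSet

theorem IsRect.inter' {d : ℕ} {R S : Set (Fin d → ℝ)} (h : IsRect R) (h' : IsRect S) :
    IsRect (R ∩ S) := by
  obtain ⟨I, hI, rfl⟩ := h
  obtain ⟨J, hJ, rfl⟩ := h'
  exact ⟨fun i => I i ∩ J i, fun i => (hI i).inter (hJ i), Set.pi_inter_distrib.symm⟩

theorem isRect_univ' {d : ℕ} : IsRect (Set.univ : Set (Fin d → ℝ)) :=
  ⟨fun _ => Set.univ, fun _ => Set.ordConnected_univ, by simp⟩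

theorem isRect_ball' {d : ℕ} (x : Fin d → ℝ) {r : ℝ} (hr : 0 < r) : IsRect (Metric.ball x r) := by
  refine ⟨fun i => Metric.ball (x i) r, fun i => ?_, ball_pi x hr⟩
  simp only [Real.ball_eq_Ioo]
  exact Set.ordConnected_Ioo

theorem IsRect.preimage' {d : ℕ} {A : Set (Fin d → ℝ)} (h : IsRect A) (c : ℝ) (hc : 0 ≤ c)
    (t : Fin d → ℝ) : IsRect ((fun x => c • (x - t)) ⁻¹' A) := by
  obtain ⟨I, hI, rfl⟩ := h
  refine ⟨fun i => (fun y => c * (y - t i)) ⁻¹' I i, fun i => ?_, ?_⟩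
  · refine (hI i).preimage_mono ?_
    intro a b hab
    exact mul_le_mul_of_nonneg_left (sub_le_sub_right hab _) hc
  · ext x
    simp [Set.mem_pi]

theorem weak_transfer' {p : ℕ} (ν ν' : ℕ → Measure (Fin p → ℝ)) (Y : Measure (Fin p → ℝ))
    (hY : IsProbabilityMeasure Y) (hν : ∀ n, IsProbabilityMeasure (ν n))
    (hν' : ∀ᶠ n in atTop, IsProbabilityMeasure (ν' n))
    (hd : ∀ A, IsRect A → Tendsto (fun n => (ν n).real A - (ν' n).real A) atTop (𝓝 0))
    (h : TendstoInDist atTop ν Y) : TendstoInDist atTop ν' Y := by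
  classical
  let Yp : ProbabilityMeasure (Fin p → ℝ) := ⟨Y, hY⟩
  let P : ℕ → ProbabilityMeasure (Fin p → ℝ) := fun n => ⟨ν n, hν n⟩
  let Q : ℕ → ProbabilityMeasure (Fin p → ℝ) := fun n =>
    if h : IsProbabilityMeasure (ν' n) then ⟨ν' n, h⟩ else Yp
  have hQ : ∀ᶠ n in atTop, (Q n : Measure (Fin p → ℝ)) = ν' n := by
    filter_upwards [hν'] with n hn
    simp [Q, hn]
  have hP : Tendsto P atTop (𝓝 Yp) :=
    ProbabilityMeasure.tendsto_iff_forall_integral_tendsto.2 h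
  have hQt : Tendsto Q atTop (𝓝 Yp) := by
    let S : Set (Set (Fin p → ℝ)) := {A | IsRect A ∧ Y (frontier A) = 0}
    have hS : IsPiSystem S := by
      rintro A ⟨hA, hA'⟩ B ⟨hB, hB'⟩ -
      exact ⟨hA.inter' hB, null_frontier_inter hA' hB'⟩
    apply hS.tendsto_probabilityMeasure_of_tendsto_of_mem
    · exact fun A hA => hA.1.measurableSet'
    · intro u hu x hx
      obtain ⟨ε, εpos, hε⟩ : ∃ ε > 0, Metric.ball x ε ⊆ u := Metric.isOpen_iff.1 hu x hx
      obtain ⟨r, hr, hr0⟩ := exists_null_frontier_thickening Y {x} εpos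
      rw [Metric.thickening_singleton] at hr0
      exact ⟨Metric.ball x r, ⟨isRect_ball' x hr.1, hr0⟩, Metric.ball_mem_nhds x hr.1,
        (Metric.ball_subset_ball hr.2.le).trans hε⟩
    · rintro A ⟨hA, hA'⟩
      have h1 := ProbabilityMeasure.tendsto_measure_of_null_frontier_of_tendsto' hP
        (E := A) hA'
      have h2 : Tendsto (fun n => (ν n).real A) atTop (𝓝 (Y.real A)) :=
        (ENNReal.tendsto_toReal (measure_ne_top Y A)).comp h1
      have h3 := h2.sub (hd A hA)
      simp only [sub_sub_cancel, sub_zero] at h3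
      rw [← NNReal.tendsto_coe]
      refine Tendsto.congr' ?_ h3
      filter_upwards [hQ] with n hn
      rw [← hn]
      rfl
  intro f
  refine Tendsto.congr' ?_ (ProbabilityMeasure.tendsto_iff_forall_integral_tendsto.1 hQt f)
  filter_upwards [hQ] with n hn
  rw [hn]

theorem le_ksDistProd' {p d : ℕ} (P Q : Measure ((Fin p → ℝ) × (Fin d → ℝ)))
    [IsProbabilityMeasure P] [IsProbabilityMeasure Q] {A : Set (Fin p → ℝ)} {B : Set (Fin d → ℝ)}
    (hA : IsRect A) (hB : IsRect B) :
    |P.real (A ×ˢ B) - Q.real (A ×ˢ B)| ≤ ksDistProd P Q := by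
  refine le_ciSup (f := fun R : {R : Set ((Fin p → ℝ) × (Fin d → ℝ)) // IsRectProd R} =>
    |(P R.1).toReal - (Q R.1).toReal|) ⟨1, ?_⟩ ⟨A ×ˢ B, A, B, hA, hB, rfl⟩
  rintro _ ⟨R, rfl⟩
  have h1 : P.real R.1 ≤ 1 := measureReal_le_one
  have h2 : Q.real R.1 ≤ 1 := measureReal_le_one
  have h3 : 0 ≤ P.real R.1 := measureReal_nonneg
  have h4 : 0 ≤ Q.real R.1 := measureReal_nonneg
  change |P.real R.1 - Q.real R.1| ≤ 1
  rw [abs_le]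
  constructor <;> linarith

theorem ratio_bound' {a b p q K : ℝ} (hp : 0 < p) (hq : 0 < q) (hb : 0 ≤ b) (hbq : b ≤ q)
    (hab : |a - b| ≤ K) (hpq : |p - q| ≤ K) : |p⁻¹ * a - q⁻¹ * b| ≤ 2 * (K / p) := by
  have e : p⁻¹ * a - q⁻¹ * b = (a - b) / p + (b / q) * ((q - p) / p) := by
    field_simp
    ring
  have h1 : |(a - b) / p| ≤ K / p := by
    rw [abs_div, abs_of_pos hp]
    gcongr
  have h2 : |(q - p) / p| ≤ K / p := by
    rw [abs_div, abs_of_pos hp, abs_sub_comm]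
    gcongr
  have h3 : |b / q| ≤ 1 := by
    rw [abs_of_nonneg (by positivity)]
    exact (div_le_one hq).2 hbq
  have h4 : |(b / q) * ((q - p) / p)| ≤ 1 * (K / p) := by
    rw [abs_mul]
    gcongr
  rw [e]
  refine (abs_add_le _ _).trans ?_
  linarith

theorem map_cond_real' {p d : ℕ} (P : Measure ((Fin p → ℝ) × (Fin d → ℝ)))
    {R : Set (Fin d → ℝ)} (hR : IsRect R) {A : Set (Fin p → ℝ)} (hA : IsRect A) (c : ℝ)
    (t : Fin p → ℝ) :
    (((P (Set.univ ×ˢ R))⁻¹ • P.restrict (Set.univ ×ˢ R)).map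
        (fun z => c • (z.1 - t))).real A =
      (P.real (Set.univ ×ˢ R))⁻¹ * P.real (((fun x => c • (x - t)) ⁻¹' A) ×ˢ R) := by
  have hm : Measurable (fun z : (Fin p → ℝ) × (Fin d → ℝ) => c • (z.1 - t)) := by fun_prop
  have hs : MeasurableSet ((fun z : (Fin p → ℝ) × (Fin d → ℝ) => c • (z.1 - t)) ⁻¹' A) :=
    hm hA.measurableSet'
  rw [Measure.real, Measure.map_apply hm hA.measurableSet', Measure.smul_apply,
    Measure.restrict_apply hs, smul_eq_mul, ENNReal.toReal_mul, ENNReal.toReal_inv]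
  congr 2
  congr 1
  ext z
  simp

theorem map_cond_prob' {p d : ℕ} (P : Measure ((Fin p → ℝ) × (Fin d → ℝ)))
    [IsProbabilityMeasure P] (R : Set (Fin d → ℝ)) (h0 : P (Set.univ ×ˢ R) ≠ 0) (c : ℝ)
    (t : Fin p → ℝ) :
    IsProbabilityMeasure (((P (Set.univ ×ˢ R))⁻¹ • P.restrict (Set.univ ×ˢ R)).map
        (fun z => c • (z.1 - t))) := by
  have hm : Measurable (fun z : (Fin p → ℝ) × (Fin d → ℝ) => c • (z.1 - t)) := by fun_prop
  constructor
  rw [Measure.map_apply hm MeasurableSet.univ, Set.preimage_univ, Measure.smul_apply,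
    Measure.restrict_apply_univ, smul_eq_mul, ENNReal.inv_mul_cancel h0 (measure_ne_top _ _)]

/-- Theorem 3.3, ABC posterior convergence: with a proper prior,
rectangles `R n0` with `p_{n0} = P(s ∈ R_{n0} | n = n0) > 0` and `KS_{n0}/p_{n0} → 0`,
if `n0^{b'} (θ - θ_{n0}) | (n = n0, s ∈ R_{n0})` converges in distribution to `Y`
(which has a continuous cdf), then `n0^{b'} (θ - θ_{n0}) | (n_dp = n0, s ∈ R_{n0})`
converges in distribution to `Y` as well. -/
theorem statement3 {p d : ℕ}
    -- `μB n0` is the joint law `p(θ, s | n = n0)` of the parameter and the DP summary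
    (μB : ℕ → Measure ((Fin p → ℝ) × (Fin d → ℝ)))
    (hμB : ∀ n, IsProbabilityMeasure (μB n))
    -- the (proper) posterior `p(n = k | n_dp = n0)`, supported on k ≥ 1
    (post : ℕ → ℕ → ℝ≥0∞)
    (hpost0 : ∀ n0, post n0 0 = 0) (hpost1 : ∀ n0, ∑' k, post n0 k = 1)
    -- the sequence of rectangles
    (R : ℕ → Set (Fin d → ℝ)) (hR : ∀ n0, IsRect (R n0))
    (hp : ∀ n0, μB n0 (Set.univ ×ˢ R n0) ≠ 0)
    (hKSp : Tendsto (fun n0 =>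
        ksDistProd (μB n0) (Measure.sum fun k => post n0 k • μB k) /
          (μB n0 (Set.univ ×ˢ R n0)).toReal) atTop (𝓝 0))
    (b' : ℝ) (hb' : 0 < b')
    (θseq : ℕ → (Fin p → ℝ))
    (Y : Measure (Fin p → ℝ)) (hY : IsProbabilityMeasure Y)
    (hYcdf : Continuous (mcdf Y))
    -- `n0^{b'}(θ - θ_{n0}) | (n = n0, s ∈ R_{n0})` converges in distribution to `Y`
    (hconv : TendstoInDist atTop
      (fun n0 => ((μB n0 (Set.univ ×ˢ R n0))⁻¹ • (μB n0).restrict (Set.univ ×ˢ R n0)).map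
        (fun z => (n0 : ℝ) ^ b' • (z.1 - θseq n0))) Y) :
    TendstoInDist atTop
      (fun n0 =>
        (((Measure.sum fun k => post n0 k • μB k) (Set.univ ×ˢ R n0))⁻¹ •
            (Measure.sum fun k => post n0 k • μB k).restrict (Set.univ ×ˢ R n0)).map
          (fun z => (n0 : ℝ) ^ b' • (z.1 - θseq n0))) Y := by
  have hQ : ∀ n0, IsProbabilityMeasure (Measure.sum fun k => post n0 k • μB k) := by
    intro n0
    constructor
    rw [Measure.sum_apply _ MeasurableSet.univ]
    simp [hpost1]
  generalize hQdef : (fun n0 => Measure.sum fun k => post n0 k • μB k) = Q at *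
  have hQe : ∀ n0, (Measure.sum fun k => post n0 k • μB k) = Q n0 := fun n0 => congrFun hQdef n0
  simp only [hQe] at hQ hKSp ⊢
  have hpp : ∀ n0, 0 < (μB n0).real (Set.univ ×ˢ R n0) := fun n0 =>
    ENNReal.toReal_pos (hp n0) (measure_ne_top _ _)
  have hq : ∀ᶠ n0 in atTop, 0 < (Q n0).real (Set.univ ×ˢ R n0) := by
    filter_upwards [hKSp.eventually (gt_mem_nhds (zero_lt_one' ℝ))] with n0 hn
    have h1 := le_ksDistProd' (μB n0) (Q n0) isRect_univ' (hR n0)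
    have h2 := (div_lt_one (hpp n0)).1 hn
    have h3 := (abs_le.1 h1).2
    linarith
  refine weak_transfer' _ _ Y hY (fun n0 => map_cond_prob' (μB n0) (R n0) (hp n0) _ _) ?_ ?_ hconv
  · filter_upwards [hq] with n0 hn
    refine map_cond_prob' (Q n0) (R n0) ?_ _ _
    intro h0
    simp [Measure.real, h0] at hn
  · intro A hA
    have h2 := hKSp.const_mul 2
    rw [mul_zero] at h2
    refine squeeze_zero_norm' ?_ h2
    filter_upwards [hq] with n0 hn
    rw [map_cond_real' _ (hR n0) hA, map_cond_real' _ (hR n0) hA, Real.norm_eq_abs]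
    refine ratio_bound' (hpp n0) hn measureReal_nonneg ?_ ?_ ?_
    · exact measureReal_mono (Set.prod_mono_left (Set.subset_univ _))
    · exact le_ksDistProd' _ _ (hA.preimage' _ (Real.rpow_nonneg (Nat.cast_nonneg _) _) _) (hR n0)
    · exact le_ksDistProd' _ _ isRect_univ' (hR n0)
end

section
/- Let p(s|x) be the distribution of a (0,δ)-DP mechanism, let p(x|θ,n) be the distribution of n i.i.d. records, and let p(n) be a (possibly improper) prior on n with proper posterior p(n | n_dp). Then TV(p(s | θ, n = n0), p(s | θ, n_dp = n0)) ≤ δ · E_{n | n_dp = n0} |n − n0|, and if p(θ) is a proper prior on θ, then also TV(p(s, θ | n = n0), p(s, θ | n_dp = n0)) ≤ δ · E_{n | n_dp = n0} |n − n0|. -/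
open MeasureTheory Filter Topology Asymptotics
open scoped ENNReal

lemma tv_le_apply {α : Type*} [MeasurableSpace α] (P Q : Measure α)
    [IsProbabilityMeasure P] [IsProbabilityMeasure Q] (c : ℝ) (h : tvDist P Q ≤ c)
    (S : Set α) (hS : MeasurableSet S) :
    P S ≤ Q S + ENNReal.ofReal c ∧ Q S ≤ P S + ENNReal.ofReal c := by
  have hb : BddAbove (Set.range fun S : {S : Set α // MeasurableSet S} =>
      |(P S.1).toReal - (Q S.1).toReal|) := by
    refine ⟨1, ?_⟩
    rintro _ ⟨T, rfl⟩
    have h1 : P.real T.1 ≤ 1 := measureReal_le_one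
    have h2 : Q.real T.1 ≤ 1 := measureReal_le_one
    have h3 : 0 ≤ P.real T.1 := measureReal_nonneg
    have h4 : 0 ≤ Q.real T.1 := measureReal_nonneg
    change |P.real T.1 - Q.real T.1| ≤ 1
    rw [abs_le]; constructor <;> linarith
  have h1 : |(P S).toReal - (Q S).toReal| ≤ c := (le_ciSup hb ⟨S, hS⟩).trans h
  have hc : 0 ≤ c := (abs_nonneg _).trans h1
  rw [abs_le] at h1
  constructor
  · rw [← ENNReal.ofReal_toReal (measure_ne_top P S), ← ENNReal.ofReal_toReal (measure_ne_top Q S),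
      ← ENNReal.ofReal_add ENNReal.toReal_nonneg hc]
    exact ENNReal.ofReal_le_ofReal (by linarith)
  · rw [← ENNReal.ofReal_toReal (measure_ne_top P S), ← ENNReal.ofReal_toReal (measure_ne_top Q S),
      ← ENNReal.ofReal_add ENNReal.toReal_nonneg hc]
    exact ENNReal.ofReal_le_ofReal (by linarith)

lemma tv_le_of_apply {α : Type*} [MeasurableSpace α] (P Q : Measure α)
    [IsFiniteMeasure P] [IsFiniteMeasure Q] (C : ℝ≥0∞)
    (h : ∀ S, MeasurableSet S → P S ≤ Q S + C ∧ Q S ≤ P S + C) :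
    ENNReal.ofReal (tvDist P Q) ≤ C := by
  by_cases hC : C = ⊤
  · simp [hC]
  refine ENNReal.ofReal_le_of_le_toReal ?_
  haveI : Nonempty {S : Set α // MeasurableSet S} := ⟨⟨∅, MeasurableSet.empty⟩⟩
  refine ciSup_le fun S => ?_
  obtain ⟨h1, h2⟩ := h S.1 S.2
  have h1' := ENNReal.toReal_mono (by finiteness) h1
  have h2' := ENNReal.toReal_mono (by finiteness) h2
  rw [ENNReal.toReal_add (by finiteness) hC] at h1' h2'
  rw [abs_le]; constructor <;> linarith

lemma step_aux {𝒳 : Type*} [MeasurableSpace 𝒳] {d : ℕ}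
    (M : (n : ℕ) → (Fin n → 𝒳) → Measure (Fin d → ℝ))
    (hM : ∀ n x, IsProbabilityMeasure (M n x))
    (hMmeas : ∀ n, Measurable (M n)) (δ : ℝ)
    (hDP : ∀ n (x : Fin (n + 1) → 𝒳) (i : Fin (n + 1)),
      tvDist (M (n + 1) x) (M n (x ∘ i.succAbove)) ≤ δ)
    (q : Measure 𝒳) [IsProbabilityMeasure q] (n : ℕ) (S : Set (Fin d → ℝ)) (hS : MeasurableSet S) :
    (Measure.pi fun _ : Fin (n + 1) => q).bind (M (n + 1)) S ≤
      (Measure.pi fun _ : Fin n => q).bind (M n) S + ENNReal.ofReal δ ∧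
    (Measure.pi fun _ : Fin n => q).bind (M n) S ≤
      (Measure.pi fun _ : Fin (n + 1) => q).bind (M (n + 1)) S + ENNReal.ofReal δ := by
  have hmp : MeasurePreserving (fun x : Fin (n + 1) → 𝒳 => x ∘ (0 : Fin (n + 1)).succAbove)
      (Measure.pi fun _ : Fin (n + 1) => q) (Measure.pi fun _ : Fin n => q) :=
    (measurePreserving_snd (μ := q) (ν := Measure.pi fun _ : Fin n => q)).comp
      (measurePreserving_piFinSuccAbove (fun _ : Fin (n + 1) => q) 0)
  have hf : ∀ n, Measurable fun x => M n x S := fun n =>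
    (Measure.measurable_coe hS).comp (hMmeas n)
  have e : ∫⁻ x, M n x S ∂(Measure.pi fun _ : Fin n => q) =
      ∫⁻ x, M n (x ∘ (0 : Fin (n + 1)).succAbove) S ∂(Measure.pi fun _ : Fin (n + 1) => q) :=
    (hmp.lintegral_comp (hf n)).symm
  rw [Measure.bind_apply hS (hMmeas _).aemeasurable, Measure.bind_apply hS (hMmeas _).aemeasurable,
    e]
  have hc : ∀ c : ℝ≥0∞, c = ∫⁻ _, c ∂(Measure.pi fun _ : Fin (n + 1) => q) := by simp
  have key := fun x => tv_le_apply _ _ δ (hDP n x 0) S hS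
  rw [hc (ENNReal.ofReal δ), ← lintegral_add_right _ measurable_const,
    ← lintegral_add_right _ measurable_const]
  exact ⟨lintegral_mono fun x => (key x).1, lintegral_mono fun x => (key x).2⟩

lemma steps_aux (a : ℕ → ℝ≥0∞) (δ : ℝ≥0∞)
    (h : ∀ n, a (n + 1) ≤ a n + δ ∧ a n ≤ a (n + 1) + δ) (n j : ℕ) :
    a (n + j) ≤ a n + δ * j ∧ a n ≤ a (n + j) + δ * j := by
  induction j with
  | zero => simp
  | succ j ih =>
    push_cast
    rw [← add_assoc, mul_add, mul_one]
    constructor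
    · calc a (n + j + 1) ≤ a (n + j) + δ := (h _).1
        _ ≤ a n + δ * j + δ := by gcongr; exact ih.1
        _ = _ := by ring
    · calc a n ≤ a (n + j) + δ * j := ih.2
        _ ≤ a (n + j + 1) + δ + δ * j := by gcongr; exact (h _).2
        _ = _ := by ring

lemma steps_abs (a : ℕ → ℝ≥0∞) (δ : ℝ≥0∞)
    (h : ∀ n, a (n + 1) ≤ a n + δ ∧ a n ≤ a (n + 1) + δ) (n k : ℕ) :
    a n ≤ a k + δ * ENNReal.ofReal |(k : ℝ) - n| ∧
    a k ≤ a n + δ * ENNReal.ofReal |(k : ℝ) - n| := by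
  rcases le_total n k with hk | hk
  · obtain ⟨j, rfl⟩ := Nat.exists_eq_add_of_le hk
    have := steps_aux a δ h n j
    simpa using this.symm
  · obtain ⟨j, rfl⟩ := Nat.exists_eq_add_of_le hk
    have := steps_aux a δ h k j
    simpa using this

lemma mix_aux (a p w : ℕ → ℝ≥0∞) (δ : ℝ≥0∞) (hp : ∑' k, p k = 1) (n : ℕ)
    (h : ∀ k, a n ≤ a k + δ * w k ∧ a k ≤ a n + δ * w k) :
    a n ≤ ∑' k, p k * a k + δ * ∑' k, p k * w k ∧
    ∑' k, p k * a k ≤ a n + δ * ∑' k, p k * w k := by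
  have e : a n = ∑' k, p k * a n := by rw [ENNReal.tsum_mul_right, hp, one_mul]
  rw [← ENNReal.tsum_mul_left]
  constructor
  · rw [← ENNReal.tsum_add]
    conv_lhs => rw [e]
    refine ENNReal.tsum_le_tsum fun k => ?_
    calc p k * a n ≤ p k * (a k + δ * w k) := by gcongr; exact (h k).1
      _ = _ := by ring
  · conv_rhs => rw [e]
    rw [← ENNReal.tsum_add]
    refine ENNReal.tsum_le_tsum fun k => ?_
    calc p k * a k ≤ p k * (a n + δ * w k) := by gcongr; exact (h k).2
      _ = _ := by ring

lemma meas_pair {Θ E : Type*} [MeasurableSpace Θ] [MeasurableSpace E]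
    (κ : Θ → Measure E) (hκ : Measurable κ) (hp : ∀ t, IsProbabilityMeasure (κ t)) :
    Measurable fun t => (κ t).map fun s => (s, t) := by
  let K : ProbabilityTheory.Kernel Θ E := ⟨κ, hκ⟩
  haveI : ProbabilityTheory.IsMarkovKernel K := ⟨hp⟩
  refine Measure.measurable_of_measurable_coe _ fun S hS => ?_
  have h2 : Measurable fun t => K t (Prod.mk t ⁻¹' {p : Θ × E | (p.2, p.1) ∈ S}) :=
    ProbabilityTheory.Kernel.measurable_kernel_prodMk_left (measurable_swap hS)
  convert h2 using 2 with t
  rw [Measure.map_apply (by fun_prop) hS]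
  rfl

lemma pair_aux {Θ E : Type*} [MeasurableSpace Θ] [MeasurableSpace E]
    (κ η : Θ → Measure E) (hκ : Measurable κ) (hp : ∀ t, IsProbabilityMeasure (κ t))
    (hη : Measurable η) (hq : ∀ t, IsProbabilityMeasure (η t)) (C : ℝ≥0∞)
    (h : ∀ t S, MeasurableSet S → κ t S ≤ η t S + C ∧ η t S ≤ κ t S + C)
    (π : Measure Θ) [IsProbabilityMeasure π] :
    ENNReal.ofReal (tvDist (π.bind fun t => (κ t).map fun s => (s, t))
      (π.bind fun t => (η t).map fun s => (s, t))) ≤ C := by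
  have m1 := meas_pair κ hκ hp
  have m2 := meas_pair η hη hq
  have hmk : ∀ t : Θ, Measurable fun s : E => (s, t) := fun t => by fun_prop
  haveI : IsProbabilityMeasure (π.bind fun t => (κ t).map fun s => (s, t)) := ⟨by
    rw [Measure.bind_apply .univ m1.aemeasurable]
    simp [Measure.map_apply (hmk _) .univ]⟩
  haveI : IsProbabilityMeasure (π.bind fun t => (η t).map fun s => (s, t)) := ⟨by
    rw [Measure.bind_apply .univ m2.aemeasurable]
    simp [Measure.map_apply (hmk _) .univ]⟩
  refine tv_le_of_apply _ _ _ fun S hS => ?_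
  rw [Measure.bind_apply hS m1.aemeasurable, Measure.bind_apply hS m2.aemeasurable]
  have hc : C = ∫⁻ _, C ∂π := by simp
  rw [hc, ← lintegral_add_right _ measurable_const, ← lintegral_add_right _ measurable_const]
  constructor <;> refine lintegral_mono fun t => ?_ <;>
    simp only [Measure.map_apply (hmk t) hS]
  · exact (h t _ (hmk t hS)).1
  · exact (h t _ (hmk t hS)).2

/-- Theorem 4.2: if `p(s|x)` is a `(0,δ)`-DP mechanism (TV distance at most
`δ` on datasets differing by addition/removal of one record), `p(x|θ,n)` is the law of
`n` i.i.d. records, and `p(n|n_dp)` is a proper posterior, then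
`TV(p(s | θ, n = n0), p(s | θ, n_dp = n0)) ≤ δ · E_{n | n_dp = n0} |n − n0|`, and with a
proper prior on `θ`, `TV(p(s, θ | n = n0), p(s, θ | n_dp = n0))` satisfies the same
bound. -/
theorem statement5 {𝒳 Θ : Type*} [MeasurableSpace 𝒳] [MeasurableSpace Θ] {d : ℕ}
    -- the privacy mechanism, acting on datasets of each size n
    (M : (n : ℕ) → (Fin n → 𝒳) → Measure (Fin d → ℝ))
    (hM : ∀ n x, IsProbabilityMeasure (M n x))
    (hMmeas : ∀ n, Measurable (M n))
    (δ : ℝ) (hδ : 0 ≤ δ)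
    -- (0,δ)-DP: removing any one record moves the output law by at most δ in TV
    (hDP : ∀ n (x : Fin (n + 1) → 𝒳) (i : Fin (n + 1)),
      tvDist (M (n + 1) x) (M n (x ∘ i.succAbove)) ≤ δ)
    -- per-record data distribution
    (Q : Θ → Measure 𝒳) (hQ : ∀ θ, IsProbabilityMeasure (Q θ))
    (hmargmeas : ∀ n : ℕ, Measurable fun θ => (Measure.pi fun _ : Fin n => Q θ).bind (M n))
    -- proper posterior `p(n = k | n_dp = n0)`, supported on k ≥ 1
    (post : ℕ → ℕ → ℝ≥0∞)
    (hpost0 : ∀ n0, post n0 0 = 0) (hpost1 : ∀ n0, ∑' k, post n0 k = 1)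
    -- proper prior on θ
    (π : Measure Θ) (hπ : IsProbabilityMeasure π)
    (θ : Θ) (n0 : ℕ) :
    ENNReal.ofReal (tvDist
        ((Measure.pi fun _ : Fin n0 => Q θ).bind (M n0))
        (Measure.sum fun k => post n0 k • (Measure.pi fun _ : Fin k => Q θ).bind (M k)))
      ≤ ENNReal.ofReal δ * ∑' k : ℕ, post n0 k * ENNReal.ofReal |(k : ℝ) - (n0 : ℝ)|
    ∧ ENNReal.ofReal (tvDist
        (π.bind fun θ' =>
          (((Measure.pi fun _ : Fin n0 => Q θ').bind (M n0)).map fun s => (s, θ')))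
        (π.bind fun θ' =>
          ((Measure.sum fun k =>
            post n0 k • (Measure.pi fun _ : Fin k => Q θ').bind (M k)).map fun s => (s, θ'))))
      ≤ ENNReal.ofReal δ * ∑' k : ℕ, post n0 k * ENNReal.ofReal |(k : ℝ) - (n0 : ℝ)| := by
  have pm : ∀ t n, IsProbabilityMeasure ((Measure.pi fun _ : Fin n => Q t).bind (M n)) := by
    intro t n
    refine ⟨?_⟩
    rw [Measure.bind_apply .univ (hMmeas n).aemeasurable]
    simp
  have ps : ∀ t, IsProbabilityMeasure (Measure.sum fun k =>
      post n0 k • (Measure.pi fun _ : Fin k => Q t).bind (M k)) := by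
    intro t
    refine ⟨?_⟩
    rw [Measure.sum_apply _ .univ]
    simp [hpost1]
  have ms : Measurable fun t => (Measure.sum fun k =>
      post n0 k • (Measure.pi fun _ : Fin k => Q t).bind (M k)) := by
    refine Measure.measurable_of_measurable_coe _ fun S hS => ?_
    simp only [Measure.sum_apply _ hS, Measure.smul_apply, smul_eq_mul]
    exact Measurable.tsum fun k =>
      ((Measure.measurable_coe hS).comp (hmargmeas k)).const_mul _
  have key : ∀ t S, MeasurableSet S → 
      (Measure.pi fun _ : Fin n0 => Q t).bind (M n0) S ≤
        (Measure.sum fun k => post n0 k • (Measure.pi fun _ : Fin k => Q t).bind (M k)) S +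
          ENNReal.ofReal δ * ∑' k : ℕ, post n0 k * ENNReal.ofReal |(k : ℝ) - (n0 : ℝ)| ∧
      (Measure.sum fun k => post n0 k • (Measure.pi fun _ : Fin k => Q t).bind (M k)) S ≤
        (Measure.pi fun _ : Fin n0 => Q t).bind (M n0) S +
          ENNReal.ofReal δ * ∑' k : ℕ, post n0 k * ENNReal.ofReal |(k : ℝ) - (n0 : ℝ)| := by
    intro t S hS
    rw [Measure.sum_apply _ hS]
    simp only [Measure.smul_apply, smul_eq_mul]
    exact mix_aux (fun k => (Measure.pi fun _ : Fin k => Q t).bind (M k) S) _ _ _ (hpost1 n0) n0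
      (steps_abs _ _ (fun n => step_aux M hM hMmeas δ hDP (Q t) n S hS) n0)
  exact ⟨tv_le_of_apply _ _ _ (key θ),
    pair_aux _ _ (hmargmeas n0) (fun t => pm t n0) ms ps _ key π⟩
end

section
/- Let (n_dp(γ))_{γ>0} be a collection of privacy mechanisms for the sample size such that for every γ > 0, E_{n | n_dp(γ) = n0} |n − n0| = γ. Let p(s|x) be a (0,δ)-DP mechanism, p(x|θ,n) the distribution of n i.i.d. records, p(n) a (possibly improper) prior with proper posterior, and p(θ) a proper prior. Then for any measurable set S such that P(s ∈ S | n = n0) > 0 and P(s ∈ S | n_dp(γ) = n0) > 0 for all γ, the posterior distributions satisfy TV(p(θ | s ∈ S, n_dp(γ) = n0), p(θ | s ∈ S, n = n0)) → 0 as γ → 0. -/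
open MeasureTheory Filter Topology Asymptotics
open scoped ENNReal

open ProbabilityTheory in
lemma s6_meas {Θ Y : Type*} [MeasurableSpace Θ] [MeasurableSpace Y]
    (κ : Θ → Measure Y) (hκ : Measurable κ) (hp : ∀ θ, IsProbabilityMeasure (κ θ)) :
    Measurable fun θ => (κ θ).map fun s => (θ, s) := by
  refine Measure.measurable_of_measurable_coe _ fun B hB => ?_
  let K : Kernel Θ Y := ⟨κ, hκ⟩
  have : IsMarkovKernel K := ⟨hp⟩
  have h := Kernel.measurable_kernel_prodMk_left (κ := K) hB
  convert h using 1
  funext θ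
  rw [Measure.map_apply measurable_prodMk_left hB]
  rfl

lemma s6_joint {Θ Y : Type*} [MeasurableSpace Θ] [MeasurableSpace Y]
    (π : Measure Θ) (κ : Θ → Measure Y) (hκ : Measurable κ)
    (hp : ∀ θ, IsProbabilityMeasure (κ θ)) (S : Set Y) (hS : MeasurableSet S)
    (A : Set Θ) (hA : MeasurableSet A) :
    (π.bind fun θ => (κ θ).map fun s => (θ, s)) (A ×ˢ S) = ∫⁻ θ in A, κ θ S ∂π := by
  rw [Measure.bind_apply (hA.prod hS) (s6_meas κ hκ hp).aemeasurable, ← lintegral_indicator hA]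
  refine lintegral_congr fun θ => ?_
  rw [Measure.map_apply measurable_prodMk_left (hA.prod hS)]
  by_cases h : θ ∈ A
  · rw [Set.mk_preimage_prod_right h, Set.indicator_of_mem h]
  · rw [Set.mk_preimage_prod_right_eq_empty h, Set.indicator_of_notMem h, measure_empty]

lemma s6_post {Θ Y : Type*} [MeasurableSpace Θ] [MeasurableSpace Y]
    (π : Measure Θ) (κ : Θ → Measure Y) (hκ : Measurable κ)
    (hp : ∀ θ, IsProbabilityMeasure (κ θ)) (S : Set Y) (hS : MeasurableSet S)
    (A : Set Θ) (hA : MeasurableSet A) :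
    ((((π.bind fun θ => (κ θ).map fun s => (θ, s)) (Set.univ ×ˢ S))⁻¹ •
      (((π.bind fun θ => (κ θ).map fun s => (θ, s)).restrict (Set.univ ×ˢ S)).map Prod.fst)) A)
      = (∫⁻ θ, κ θ S ∂π)⁻¹ * ∫⁻ θ in A, κ θ S ∂π := by
  rw [Measure.smul_apply, Measure.map_apply measurable_fst hA,
    Measure.restrict_apply (measurable_fst hA), s6_joint π κ hκ hp S hS _ MeasurableSet.univ,
    Measure.restrict_univ, ← s6_joint π κ hκ hp S hS A hA, smul_eq_mul]
  congr 2
  ext x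
  simp

lemma s6_mix (p : ℕ → ℝ≥0∞) (n0 : ℕ) (γ : ℝ)
    (hm : (∑' k : ℕ, p k * ENNReal.ofReal |(k : ℝ) - (n0 : ℝ)|) = ENNReal.ofReal γ)
    (u v : ℕ → ℝ≥0∞) (hu : ∀ k, u k ≤ 1) (huv : u n0 = v n0) :
    ∑' k, p k * u k ≤ ∑' k, p k * v k + ENNReal.ofReal γ := by
  rw [← hm, ← ENNReal.tsum_add]
  refine ENNReal.tsum_le_tsum fun k => ?_
  rw [← mul_add]
  gcongr
  by_cases h : k = n0
  · subst h; rw [huv]; exact le_self_add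
  · refine (hu k).trans (le_trans ?_ le_add_self)
    rw [← ENNReal.ofReal_one]
    refine ENNReal.ofReal_le_ofReal ?_
    have h1 : (1 : ℤ) ≤ |(k : ℤ) - n0| := Int.one_le_abs (by omega)
    exact_mod_cast h1

lemma s6_int {Θ : Type*} [MeasurableSpace Θ] (π : Measure Θ) [IsProbabilityMeasure π]
    (A : Set Θ) (f g : Θ → ℝ≥0∞) (hg : Measurable g) (c : ℝ≥0∞) (h : ∀ θ, f θ ≤ g θ + c) :
    ∫⁻ θ in A, f θ ∂π ≤ ∫⁻ θ in A, g θ ∂π + c := by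
  calc ∫⁻ θ in A, f θ ∂π ≤ ∫⁻ θ in A, (g θ + c) ∂π := lintegral_mono h
    _ = ∫⁻ θ in A, g θ ∂π + c * π A := by rw [lintegral_add_left hg, setLIntegral_const]
    _ ≤ _ := by
      gcongr
      exact mul_le_of_le_one_right (zero_le) prob_le_one

lemma s6_real (a b Za Zb γ : ℝ) (ha : 0 ≤ a) (haZ : a ≤ Za) (hZa : 0 < Za) (hZb : 0 < Zb)
    (h1 : |a - b| ≤ γ) (h2 : |Za - Zb| ≤ γ) : |Za⁻¹ * a - Zb⁻¹ * b| ≤ 2 * γ / Zb := by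
  have e : Za⁻¹ * a - Zb⁻¹ * b = ((a / Za) * (Zb - Za) + (a - b)) / Zb := by
    field_simp; ring
  rw [e, abs_div, abs_of_pos hZb]
  gcongr
  refine (abs_add_le _ _).trans ?_
  rw [abs_mul, abs_of_nonneg (by positivity : 0 ≤ a / Za), abs_sub_comm Zb Za]
  have : a / Za ≤ 1 := (div_le_one hZa).2 haZ
  nlinarith [abs_nonneg (Za - Zb)]

lemma s6_toReal (x y : ℝ≥0∞) (γ : ℝ) (hγ : 0 ≤ γ) (hx : x ≠ ⊤) (hy : y ≠ ⊤)
    (h1 : x ≤ y + ENNReal.ofReal γ) (h2 : y ≤ x + ENNReal.ofReal γ) :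
    |x.toReal - y.toReal| ≤ γ := by
  have e1 := ENNReal.toReal_mono (by finiteness) h1
  have e2 := ENNReal.toReal_mono (by finiteness) h2
  rw [ENNReal.toReal_add (by finiteness) (by finiteness), ENNReal.toReal_ofReal hγ] at e1 e2
  rw [abs_le]; constructor <;> linarith

/-- Theorem 4.4, ABC posteriors as the privacy budget grows: for a family
of sample-size mechanisms `n_dp(γ)` with posterior expectation
`E_{n | n_dp(γ) = n0}|n − n0| = γ`, a `(0,δ)`-DP mechanism for `s`, i.i.d. data, a
proper prior on `θ`, and a measurable set `S` of positive probability under both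
conditionals, the conditional posteriors `p(θ | s ∈ S, n_dp(γ) = n0)` converge in total
variation to `p(θ | s ∈ S, n = n0)` as `γ → 0⁺`. -/
theorem statement6 {𝒳 Θ : Type*} [MeasurableSpace 𝒳] [MeasurableSpace Θ] {d : ℕ}
    (M : (n : ℕ) → (Fin n → 𝒳) → Measure (Fin d → ℝ))
    (hM : ∀ n x, IsProbabilityMeasure (M n x))
    (hMmeas : ∀ n, Measurable (M n))
    (δ : ℝ) (hδ : 0 ≤ δ)
    (hDP : ∀ n (x : Fin (n + 1) → 𝒳) (i : Fin (n + 1)),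
      tvDist (M (n + 1) x) (M n (x ∘ i.succAbove)) ≤ δ)
    (Q : Θ → Measure 𝒳) (hQ : ∀ θ, IsProbabilityMeasure (Q θ))
    (hmargmeas : ∀ n : ℕ, Measurable fun θ => (Measure.pi fun _ : Fin n => Q θ).bind (M n))
    (π : Measure Θ) (hπ : IsProbabilityMeasure π)
    (n0 : ℕ)
    -- for each γ > 0, the posterior on `n` induced by the mechanism `n_dp(γ)`,
    -- proper, supported on k ≥ 1, with posterior moment `E|n - n0| = γ`
    (post : ℝ → ℕ → ℝ≥0∞)
    (hpost0 : ∀ γ : ℝ, 0 < γ → post γ 0 = 0)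
    (hpost1 : ∀ γ : ℝ, 0 < γ → ∑' k, post γ k = 1)
    (hmoment : ∀ γ : ℝ, 0 < γ →
      (∑' k : ℕ, post γ k * ENNReal.ofReal |(k : ℝ) - (n0 : ℝ)|) = ENNReal.ofReal γ)
    (S : Set (Fin d → ℝ)) (hSmeas : MeasurableSet S)
    -- P(s ∈ S | n = n0) > 0
    (hSposB : (π.bind fun θ => (Measure.pi fun _ : Fin n0 => Q θ).bind (M n0)) S ≠ 0)
    -- P(s ∈ S | n_dp(γ) = n0) > 0 for all γ > 0
    (hSposU : ∀ γ : ℝ, 0 < γ →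
      (π.bind fun θ => Measure.sum fun k =>
        post γ k • (Measure.pi fun _ : Fin k => Q θ).bind (M k)) S ≠ 0) :
    Tendsto (fun γ : ℝ =>
      tvDist
        -- p(θ | s ∈ S, n_dp(γ) = n0)
        ((((π.bind fun θ => ((Measure.sum fun k =>
              post γ k • (Measure.pi fun _ : Fin k => Q θ).bind (M k)).map fun s => (θ, s)))
              (Set.univ ×ˢ S))⁻¹ •
          (((π.bind fun θ => ((Measure.sum fun k =>
              post γ k • (Measure.pi fun _ : Fin k => Q θ).bind (M k)).map
              fun s => (θ, s))).restrict (Set.univ ×ˢ S)).map Prod.fst)))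
        -- p(θ | s ∈ S, n = n0)
        ((((π.bind fun θ =>
              (((Measure.pi fun _ : Fin n0 => Q θ).bind (M n0)).map fun s => (θ, s)))
              (Set.univ ×ˢ S))⁻¹ •
          (((π.bind fun θ =>
              (((Measure.pi fun _ : Fin n0 => Q θ).bind (M n0)).map
              fun s => (θ, s))).restrict (Set.univ ×ˢ S)).map Prod.fst))))
      (𝓝[>] (0 : ℝ)) (𝓝 0) := by
  have hκp : ∀ k θ, IsProbabilityMeasure ((Measure.pi fun _ : Fin k => Q θ).bind (M k)) := by
    intro k θ
    constructor
    rw [Measure.bind_apply MeasurableSet.univ (hMmeas k).aemeasurable]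
    simp
  generalize hκ : (fun (k : ℕ) (θ : Θ) => (Measure.pi fun _ : Fin k => Q θ).bind (M k)) = κ at *
  have hκ' : ∀ k θ, (Measure.pi fun _ : Fin k => Q θ).bind (M k) = κ k θ := by
    intro k θ; rw [← hκ]
  simp only [hκ'] at *
  have hmixp : ∀ γ : ℝ, 0 < γ → ∀ θ,
      IsProbabilityMeasure (Measure.sum fun k => post γ k • κ k θ) := by
    intro γ hγ θ
    constructor
    rw [Measure.sum_apply _ MeasurableSet.univ]
    simpa using hpost1 γ hγ
  have hmixm : ∀ γ : ℝ, Measurable fun θ => Measure.sum fun k => post γ k • κ k θ := by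
    intro γ
    refine Measure.measurable_of_measurable_coe _ fun B hB => ?_
    simp only [Measure.sum_apply _ hB, Measure.smul_apply, smul_eq_mul]
    exact Measurable.ennreal_tsum fun k =>
      ((Measure.measurable_coe hB).comp (hmargmeas k)).const_mul _
  have hev : ∀ (f : Θ → Measure (Fin d → ℝ)), Measurable f → Measurable fun θ => f θ S :=
    fun f hf => (Measure.measurable_coe hSmeas).comp hf
  rw [Measure.bind_apply hSmeas (hmargmeas n0).aemeasurable] at hSposB
  set Zb := ∫⁻ θ, κ n0 θ S ∂π with hZb
  have hfin : ∀ (f : Θ → Measure (Fin d → ℝ)), (∀ θ, IsProbabilityMeasure (f θ)) →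
      ∀ A, ∫⁻ θ in A, f θ S ∂π ≠ ⊤ := by
    intro f hf A
    refine ne_top_of_le_ne_top ENNReal.one_ne_top ?_
    calc ∫⁻ θ in A, f θ S ∂π ≤ ∫⁻ θ in A, 1 ∂π := lintegral_mono fun θ => prob_le_one
      _ ≤ 1 := by simpa using prob_le_one
  have hfin' : ∀ (f : Θ → Measure (Fin d → ℝ)), (∀ θ, IsProbabilityMeasure (f θ)) →
      ∫⁻ θ, f θ S ∂π ≠ ⊤ := by
    intro f hf
    simpa using hfin f hf Set.univ
  have hlim : Tendsto (fun γ : ℝ => 2 * γ / Zb.toReal) (𝓝[>] (0 : ℝ)) (𝓝 0) := by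
    have : Tendsto (fun γ : ℝ => 2 * γ / Zb.toReal) (𝓝 (0 : ℝ)) (𝓝 (2 * 0 / Zb.toReal)) :=
      Continuous.tendsto (by fun_prop) 0
    simp only [mul_zero, zero_div] at this
    exact this.mono_left nhdsWithin_le_nhds
  refine tendsto_of_tendsto_of_tendsto_of_le_of_le' tendsto_const_nhds hlim
    (Eventually.of_forall fun γ => Real.iSup_nonneg fun _ => abs_nonneg _) ?_
  filter_upwards [self_mem_nhdsWithin] with γ hγ
  have hγ : 0 < γ := hγ
  have hne : Nonempty {S : Set Θ // MeasurableSet S} := ⟨⟨∅, MeasurableSet.empty⟩⟩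
  refine ciSup_le fun A => ?_
  obtain ⟨A, hA⟩ := A
  have hSposU := hSposU γ hγ
  rw [Measure.bind_apply hSmeas (hmixm γ).aemeasurable] at hSposU
  rw [s6_post π _ (hmixm γ) (hmixp γ hγ) S hSmeas A hA,
    s6_post π _ (hmargmeas n0) (hκp n0) S hSmeas A hA, ENNReal.toReal_mul, ENNReal.toReal_mul,
    ENNReal.toReal_inv, ENNReal.toReal_inv]
  have e : ∀ θ, (Measure.sum fun k => post γ k • κ k θ) S = ∑' k, post γ k * κ k θ S := by
    intro θ
    rw [Measure.sum_apply _ hSmeas]; simp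
  have e0 : ∀ θ, κ n0 θ S = ∑' k, post γ k * κ n0 θ S := by
    intro θ
    rw [ENNReal.tsum_mul_right, hpost1 γ hγ, one_mul]
  have p1 : ∀ θ, (Measure.sum fun k => post γ k • κ k θ) S ≤ κ n0 θ S + ENNReal.ofReal γ := by
    intro θ
    rw [e, e0]
    exact s6_mix (post γ) n0 γ (hmoment γ hγ) (fun k => κ k θ S) (fun _ => κ n0 θ S)
      (fun k => prob_le_one) rfl
  have p2 : ∀ θ, κ n0 θ S ≤ (Measure.sum fun k => post γ k • κ k θ) S + ENNReal.ofReal γ := by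
    intro θ
    rw [e, e0]
    exact s6_mix (post γ) n0 γ (hmoment γ hγ) (fun _ => κ n0 θ S) (fun k => κ k θ S)
      (fun k => prob_le_one) rfl
  have key : ∀ B, |(∫⁻ θ in B, (Measure.sum fun k => post γ k • κ k θ) S ∂π).toReal
      - (∫⁻ θ in B, κ n0 θ S ∂π).toReal| ≤ γ := fun B =>
    s6_toReal _ _ γ hγ.le (hfin _ (hmixp γ hγ) B) (hfin _ (hκp n0) B)
      (s6_int π B _ _ (hev _ (hmargmeas n0)) _ p1) (s6_int π B _ _ (hev _ (hmixm γ)) _ p2)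
  have keyu := key Set.univ
  rw [Measure.restrict_univ] at keyu
  exact s6_real _ _ _ _ γ ENNReal.toReal_nonneg
    (ENNReal.toReal_mono (hfin' _ (hmixp γ hγ)) (setLIntegral_le_lintegral _ _))
    (ENNReal.toReal_pos hSposU (hfin' _ (hmixp γ hγ)))
    (ENNReal.toReal_pos hSposB (hfin' _ (hκp n0))) (key A) keyu
end

section
/- Suppose the summary mechanism p(s|x) satisfies ε_s-DP and the sample-size mechanism p(n_dp|n) satisfies ε_n-DP, both in the unbounded (add/remove one record) sense. Then in the reversible jump MCMC sampler: (1) the within-model acceptance probability min{1, p(s|x*)/p(s|x)}, where x* is obtained from x by replacing one record, is lower bounded by exp(−2ε_s); and (2) if p(n) is a flat (improper) prior, the between-models acceptance probability min{1, [p(n*) p(s|x*) p(n_dp|n*) q(n|n*)] / [p(n) p(s|x) p(n_dp|n) q(n*|n)]}, where x* is obtained from x by adding or deleting one record and |n* − n| = 1, is lower bounded by exp(−(ε_s + ε_n)) for all n ≥ 2, and by (1/2)·exp(−(ε_s + ε_n)) when n = 1 and n* = 2. -/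
open MeasureTheory Filter Topology

/-- The between-models proposal pmf of the reversible jump MCMC:
`q(n* | n) = 1` if `n = 1, n* = 2`; `1/2` if `n > 1` and `|n* − n| = 1`; `0` otherwise. -/
noncomputable def qprop (n n' : ℕ) : ℝ :=
  if n = 1 ∧ n' = 2 then 1
  else if 1 < n ∧ (n' = n + 1 ∨ n = n' + 1) then 1 / 2
  else 0

/-- Proposition 5.1, lower bounds on the RJMCMC acceptance probabilities:
if the density `f` of the summary mechanism satisfies `ε_s`-DP and the density `pn` of
the sample-size mechanism satisfies `ε_n`-DP (both in the unbounded, add/remove-one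
sense), then (1) the within-model acceptance probability (replacing one record) is at
least `exp(−2 ε_s)`, and (2) with a flat prior on `n`, the between-models acceptance
probability is at least `exp(−(ε_s + ε_n))` for all current `n ≥ 2` (for both the add
and the delete move), and at least `(1/2)·exp(−(ε_s + ε_n))` when `n = 1` and
`n* = 2`. -/
theorem statement8 {𝒳 : Type*}
    -- `f n x` is the density of the observed summary `s` given the database `x` of size n
    (f : (n : ℕ) → (Fin n → 𝒳) → ℝ)
    (hfpos : ∀ n x, 0 < f n x)
    (εs εn : ℝ)
    -- `ε_s`-DP for the summary mechanism, unbounded (add/remove one record) sense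
    (hfDP : ∀ n (x : Fin (n + 1) → 𝒳) (i : Fin (n + 1)),
      f (n + 1) x ≤ Real.exp εs * f n (x ∘ i.succAbove) ∧
      f n (x ∘ i.succAbove) ≤ Real.exp εs * f (n + 1) x)
    -- `pn n` is the density of the observed `n_dp` given sample size n
    (pn : ℕ → ℝ) (hpnpos : ∀ n, 0 < pn n)
    -- `ε_n`-DP for the sample-size mechanism
    (hpnDP : ∀ n : ℕ, pn (n + 1) ≤ Real.exp εn * pn n ∧ pn n ≤ Real.exp εn * pn (n + 1))
    -- flat (improper) prior on n
    (prior : ℕ → ℝ) (hpriorpos : ∀ n, 0 < prior n) (hflat : ∀ n m, prior n = prior m) :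
    -- (1) within-model move: replace one record
    (∀ n (x : Fin n → 𝒳) (i : Fin n) (v : 𝒳),
      Real.exp (-(2 * εs)) ≤ min 1 (f n (Function.update x i v) / f n x))
    -- (2) between-models, add move from n ≥ 2 to n + 1
    ∧ (∀ n (x : Fin n → 𝒳) (v : 𝒳), 2 ≤ n →
        Real.exp (-(εs + εn)) ≤ min 1
          ((prior (n + 1) * f (n + 1) (Fin.snoc x v) * pn (n + 1) * qprop (n + 1) n) /
            (prior n * f n x * pn n * qprop n (n + 1))))
    -- (2) between-models, delete move from n ≥ 2 to n − 1
    ∧ (∀ n (x : Fin (n + 1) → 𝒳), 2 ≤ n + 1 →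
        Real.exp (-(εs + εn)) ≤ min 1
          ((prior n * f n (x ∘ Fin.castSucc) * pn n * qprop n (n + 1)) /
            (prior (n + 1) * f (n + 1) x * pn (n + 1) * qprop (n + 1) n)))
    -- (2) between-models, add move from n = 1 to n* = 2
    ∧ (∀ (x : Fin 1 → 𝒳) (v : 𝒳),
        (1 / 2) * Real.exp (-(εs + εn)) ≤ min 1
          ((prior 2 * f 2 (Fin.snoc x v) * pn 2 * qprop 2 1) /
            (prior 1 * f 1 x * pn 1 * qprop 1 2))) := by
  have key : ∀ a b c d : ℝ, 0 < a → 0 < b → 0 < c → 0 < d → b ≤ Real.exp εs * a →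
      d ≤ Real.exp εn * c → Real.exp (-(εs + εn)) * (b * d) ≤ a * c := by
    intro a b c d ha hb hc hd h1 h2
    have h3 : b * d ≤ (Real.exp εs * a) * (Real.exp εn * c) :=
      mul_le_mul h1 h2 hd.le (by positivity)
    calc Real.exp (-(εs + εn)) * (b * d)
        ≤ Real.exp (-(εs + εn)) * ((Real.exp εs * a) * (Real.exp εn * c)) := by gcongr
      _ = (Real.exp (-(εs + εn)) * (Real.exp εs * Real.exp εn)) * (a * c) := by ring
      _ = a * c := by rw [← Real.exp_add, ← Real.exp_add]; simp
  have nonneg : ∀ ε a b : ℝ, 0 < a → 0 < b → a ≤ Real.exp ε * b → b ≤ Real.exp ε * a → 0 ≤ ε := by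
    intro ε a b ha hb h1 h2
    by_contra! h
    have h3 : Real.exp ε < 1 := Real.exp_lt_one_iff.2 h
    nlinarith
  have hn : 0 ≤ εn := nonneg εn _ _ (hpnpos 1) (hpnpos 0) (hpnDP 0).1 (hpnDP 0).2
  have hs : ∀ n (x : Fin (n + 1) → 𝒳), 0 ≤ εs := fun n x =>
    nonneg εs _ _ (hfpos _ _) (hfpos _ _) (hfDP n x 0).1 (hfDP n x 0).2
  have hsnoc : ∀ n (x : Fin n → 𝒳) (v : 𝒳),
      f n x ≤ Real.exp εs * f (n + 1) (Fin.snoc x v) := by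
    intro n x v
    have h := (hfDP n (Fin.snoc x v) (Fin.last n)).2
    have e : (Fin.snoc x v : Fin (n + 1) → 𝒳) ∘ (Fin.last n).succAbove = x := by
      funext j
      simp
    rwa [e] at h
  refine ⟨?_, ?_, ?_, ?_⟩
  · intro n x i v
    obtain _ | n := n
    · exact i.elim0
    have h0 := hs n x
    refine le_min (Real.exp_le_one_iff.2 (by linarith)) ?_
    rw [le_div_iff₀ (hfpos _ _)]
    have h1 := (hfDP n x i).1
    have h2 := (hfDP n (Function.update x i v) i).2
    have e : Function.update x i v ∘ i.succAbove = x ∘ i.succAbove := by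
      funext j
      simp [Fin.succAbove_ne]
    rw [e] at h2
    calc Real.exp (-(2 * εs)) * f (n + 1) x
        ≤ Real.exp (-(2 * εs)) *
          (Real.exp εs * (Real.exp εs * f (n + 1) (Function.update x i v))) := by
          gcongr
          exact h1.trans (by gcongr)
      _ = (Real.exp (-(2 * εs)) * (Real.exp εs * Real.exp εs)) *
          f (n + 1) (Function.update x i v) := by ring
      _ = f (n + 1) (Function.update x i v) := by
          rw [← Real.exp_add, ← Real.exp_add, show -(2 * εs) + (εs + εs) = 0 by ring]
          simp
  · intro n x v h
    have h0 := hs n (Fin.snoc x v)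
    refine le_min (Real.exp_le_one_iff.2 (by linarith)) ?_
    have q1 : qprop (n + 1) n = 1 / 2 := by
      unfold qprop; rw [if_neg (by omega), if_pos (by omega)]
    have q2 : qprop n (n + 1) = 1 / 2 := by
      unfold qprop; rw [if_neg (by omega), if_pos (by omega)]
    have hk := key _ _ _ _ (hfpos (n + 1) (Fin.snoc x v)) (hfpos n x) (hpnpos (n + 1)) (hpnpos n)
      (hsnoc n x v) (hpnDP n).2
    have p0 := hpriorpos n
    have f0 := hfpos n x
    have n0 := hpnpos n
    rw [q1, q2, hflat (n + 1) n, le_div_iff₀ (by positivity)]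
    have := mul_le_mul_of_nonneg_left hk p0.le
    nlinarith
  · intro n x h
    have h0 := hs n x
    refine le_min (Real.exp_le_one_iff.2 (by linarith)) ?_
    have q1 : qprop (n + 1) n = 1 / 2 := by
      unfold qprop; rw [if_neg (by omega), if_pos (by omega)]
    have q2 : 1 / 2 ≤ qprop n (n + 1) := by
      unfold qprop
      by_cases h1 : n = 1
      · rw [if_pos (by omega)]; norm_num
      · rw [if_neg (by omega), if_pos (by omega)]
    have hx := (hfDP n x (Fin.last n)).1
    rw [Fin.succAbove_last] at hx
    have hk := key _ _ _ _ (hfpos n (x ∘ Fin.castSucc)) (hfpos (n + 1) x) (hpnpos n)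
      (hpnpos (n + 1)) hx (hpnDP n).1
    have p0 := hpriorpos n
    have f0 := hfpos (n + 1) x
    have n0 := hpnpos (n + 1)
    have f1 := hfpos n (x ∘ Fin.castSucc)
    have n1 := hpnpos n
    rw [q1, hflat (n + 1) n, le_div_iff₀ (by positivity)]
    have h5 := mul_le_mul_of_nonneg_left hk p0.le
    have h6 : prior n * f n (x ∘ Fin.castSucc) * pn n * (1 / 2) ≤
        prior n * f n (x ∘ Fin.castSucc) * pn n * qprop n (n + 1) := by gcongr
    nlinarith
  · intro x v
    have h0 := hs 0 x
    have q1 : qprop 2 1 = 1 / 2 := by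
      unfold qprop; rw [if_neg (by omega), if_pos (by omega)]
    have q2 : qprop 1 2 = 1 := by
      unfold qprop; rw [if_pos (by omega)]
    refine le_min ?_ ?_
    · have : Real.exp (-(εs + εn)) ≤ 1 := Real.exp_le_one_iff.2 (by linarith)
      linarith
    have hk := key _ _ _ _ (hfpos 2 (Fin.snoc x v)) (hfpos 1 x) (hpnpos 2) (hpnpos 1)
      (hsnoc 1 x v) (hpnDP 1).2
    have p0 := hpriorpos 1
    have f0 := hfpos 1 x
    have n0 := hpnpos 1
    rw [q1, q2, hflat 2 1, le_div_iff₀ (by positivity)]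
    have := mul_le_mul_of_nonneg_left hk p0.le
    nlinarith
end

section
/- Let p(n) be a flat (improper) prior on {1,2,...}. Suppose the privacy mechanism η(n_dp | n) := p(n_dp | n) is a pmf with n ∈ ℕ and n_dp ∈ ℤ that is symmetric, i.e. η(n1 | n2) = η(n2 | n1) for all n1, n2 ∈ ℕ. If, for n0 ∈ ℕ, (n_dp − n0 | n = n0) = O_p(a_{n0}) where a_{n0} = o(n0), then also (n − n0 | n_dp = n0) = O_p(a_{n0}), where the posterior is p(n = k | n_dp = n0) = η(k | n0) / Σ_{i=1}^∞ η(i | n0). -/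
open MeasureTheory Filter Topology Asymptotics
open scoped ENNReal

/-- Lemma A.1: with a flat prior on `{1,2,...}` and a symmetric pmf
mechanism `η(n_dp | n)` (with `n ∈ ℕ`, `n_dp ∈ ℤ`), if
`(n_dp − n0 | n = n0) = O_p(a_{n0})` with `a_{n0} = o(n0)`, then also
`(n − n0 | n_dp = n0) = O_p(a_{n0})` under the posterior
`p(n = k | n_dp = n0) = η(k | n0) / ∑_{i ≥ 1} η(i | n0)`. -/
theorem statement9
    (η : ℕ → ℤ → ℝ≥0∞)
    (hη : ∀ n : ℕ, 1 ≤ n → ∑' m : ℤ, η n m = 1)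
    (hsymm : ∀ n1 n2 : ℕ, 1 ≤ n1 → 1 ≤ n2 → η n1 (n2 : ℤ) = η n2 (n1 : ℤ))
    (aseq : ℕ → ℝ) (ha : aseq =o[atTop] fun n => (n : ℝ))
    -- `(n_dp − n0 | n = n0) = O_p(aseq n0)`
    (hOp : ∀ γ : ℝ, 0 < γ → ∃ M : ℝ, 0 < M ∧ ∃ N : ℕ, ∀ n0 : ℕ, N ≤ n0 → 1 ≤ n0 →
      (∑' m : {m : ℤ // M * aseq n0 < |(m : ℝ) - (n0 : ℝ)|}, η n0 m.1)
        < ENNReal.ofReal γ) :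
    -- `(n − n0 | n_dp = n0) = O_p(aseq n0)`
    ∀ γ : ℝ, 0 < γ → ∃ M : ℝ, 0 < M ∧ ∃ N : ℕ, ∀ n0 : ℕ, N ≤ n0 → 1 ≤ n0 →
      (∑' k : {k : ℕ // 1 ≤ k ∧ M * aseq n0 < |(k : ℝ) - (n0 : ℝ)|}, η k.1 (n0 : ℤ)) /
        (∑' i : {i : ℕ // 1 ≤ i}, η i.1 (n0 : ℤ)) < ENNReal.ofReal γ := by
  intro γ hγ
  set δ : ℝ := min (γ / 2) (1 / 2) with hδ
  have hδ0 : 0 < δ := by rw [hδ]; positivity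
  have hδ1 : 2 * δ ≤ γ := by linarith [min_le_left (γ / 2) (1 / 2 : ℝ)]
  have hδ2 : δ ≤ 1 / 2 := min_le_right _ _
  obtain ⟨M, hM, N, hN⟩ := hOp δ hδ0
  have hev := ha.def (c := 1 / (2 * M)) (by positivity)
  obtain ⟨N', hN'⟩ := eventually_atTop.1 hev
  refine ⟨M, hM, max N N', fun n0 hn h1 => ?_⟩
  have hT := hN n0 (le_trans (le_max_left _ _) hn) h1
  have hb := hN' n0 (le_trans (le_max_right _ _) hn)
  have hpos : (0 : ℝ) < n0 := by exact_mod_cast h1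
  have hMa : M * aseq n0 < n0 := by
    rw [Real.norm_eq_abs, Real.norm_eq_abs, abs_of_pos hpos] at hb
    have h2 : M * aseq n0 ≤ M * (1 / (2 * M) * n0) :=
      mul_le_mul_of_nonneg_left ((le_abs_self _).trans hb) hM.le
    have h3 : M * (1 / (2 * M) * n0) = n0 / 2 := by field_simp
    linarith
  set T : Set ℤ := {m : ℤ | M * aseq n0 < |(m : ℝ) - (n0 : ℝ)|} with hTdef
  have hT' : (∑' m : T, η n0 m.1) < ENNReal.ofReal δ := hT
  -- numerator
  have hnum : (∑' k : {k : ℕ // 1 ≤ k ∧ M * aseq n0 < |(k : ℝ) - (n0 : ℝ)|}, η k.1 (n0 : ℤ))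
      ≤ ∑' m : T, η n0 m.1 := by
    let g : {k : ℕ // 1 ≤ k ∧ M * aseq n0 < |(k : ℝ) - (n0 : ℝ)|} → T :=
      fun k => ⟨(k.1 : ℤ), by simpa [hTdef] using k.2.2⟩
    have hg : Function.Injective g := by
      intro a b hab
      have : ((a.1 : ℕ) : ℤ) = b.1 := congrArg (fun t : T => t.1) hab
      exact Subtype.ext (by exact_mod_cast this)
    have h4 := ENNReal.tsum_comp_le_tsum_of_injective hg (fun m : T => η n0 m.1)
    refine le_trans (le_of_eq ?_) h4
    exact tsum_congr fun k => hsymm _ _ k.2.1 h1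
  -- denominator
  have hden : (∑' i : {i : ℕ // 1 ≤ i}, η i.1 (n0 : ℤ))
      = ∑' i : {i : ℕ // 1 ≤ i}, η n0 (i.1 : ℤ) :=
    tsum_congr fun k => hsymm _ _ k.2 h1
  set D := ∑' i : {i : ℕ // 1 ≤ i}, η i.1 (n0 : ℤ) with hD
  have hone : 1 ≤ D + ∑' m : T, η n0 m.1 := by
    let g : {i : ℕ // 1 ≤ i} → ℤ := fun k => (k.1 : ℤ)
    have hg : Function.Injective g := by
      intro a b hab
      have : ((a.1 : ℕ) : ℤ) = b.1 := hab
      exact Subtype.ext (by exact_mod_cast this)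
    have hr : ∑' m : Set.range g, η n0 m.1 = D := by
      rw [hden]; exact tsum_range (η n0) hg
    have hcov : (Set.univ : Set ℤ) ⊆ Set.range g ∪ T := by
      intro m _
      by_cases hm : 1 ≤ m
      · left
        exact ⟨⟨m.toNat, by omega⟩, by simp only [g]; omega⟩
      · right
        have hm' : (m : ℝ) ≤ 0 := by exact_mod_cast (by omega : m ≤ 0)
        simp only [hTdef, Set.mem_setOf_eq]
        rw [abs_of_neg (by linarith)]
        linarith
    calc (1 : ℝ≥0∞) = ∑' m : (Set.univ : Set ℤ), η n0 m.1 := by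
          rw [tsum_univ (η n0), hη n0 h1]
      _ ≤ ∑' m : (Set.range g ∪ T : Set ℤ), η n0 m.1 := ENNReal.tsum_mono_subtype (η n0) hcov
      _ ≤ _ := ENNReal.tsum_union_le (η n0) _ _
      _ = _ := by rw [hr]
  have hhalf : (2 : ℝ≥0∞)⁻¹ ≤ D := by
    have h5 : ENNReal.ofReal δ ≤ 2⁻¹ := by
      calc ENNReal.ofReal δ ≤ ENNReal.ofReal (1 / 2) := ENNReal.ofReal_le_ofReal hδ2
        _ = 2⁻¹ := by rw [one_div, ENNReal.ofReal_inv_of_pos (by norm_num)]; simp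
    have h6 : (2 : ℝ≥0∞)⁻¹ + 2⁻¹ ≤ D + 2⁻¹ := by
      rw [ENNReal.inv_two_add_inv_two]
      exact hone.trans (by gcongr; exact hT'.le.trans h5)
    exact (ENNReal.add_le_add_iff_right (by simp)).1 h6
  have hinv : D⁻¹ ≤ 2 := by
    have := ENNReal.inv_le_inv.2 hhalf
    simpa using this
  calc _ ≤ (∑' m : T, η n0 m.1) * 2 := by
        rw [div_eq_mul_inv]; exact mul_le_mul' hnum hinv
    _ < ENNReal.ofReal δ * 2 := ENNReal.mul_lt_mul_left (by simp) (by simp) hT'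
    _ = ENNReal.ofReal (2 * δ) := by
        rw [ENNReal.ofReal_mul (by norm_num), mul_comm]; simp
    _ ≤ ENNReal.ofReal γ := ENNReal.ofReal_le_ofReal hδ1
end

section
/- (Multivariate Polya's theorem) If X_n converges in distribution to X in ℝ^d, where X has a continuous cumulative distribution function, then the convergence of the multivariate cdfs is uniform: sup_{t ∈ ℝ^d} |F_{X_n}(t) − F_X(t)| → 0. It follows that KS(law(X_n), law(X)) → 0, where KS is the Kolmogorov–Smirnov distance over axis-aligned rectangles. -/
open MeasureTheory Filter Topology Asymptotics
open scoped ENNReal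

/-- Finite bracketing by sets with null frontier. -/
def Brack {α : Type*} [MeasurableSpace α] [TopologicalSpace α] (ν : Measure α)
    (C : Set (Set α)) : Prop :=
  ∀ ε : ℝ, 0 < ε → ∃ T : Set (Set α × Set α), T.Finite ∧
    (∀ p ∈ T, MeasurableSet p.1 ∧ MeasurableSet p.2 ∧ ν (frontier p.1) = 0 ∧
      ν (frontier p.2) = 0 ∧ ν.real (p.2 \ p.1) ≤ ε) ∧
    ∀ S ∈ C, ∃ p ∈ T, p.1 ⊆ S ∧ S ⊆ p.2

lemma Brack.mono {α : Type*} [MeasurableSpace α] [TopologicalSpace α] {ν : Measure α}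
    {C D : Set (Set α)} (h : Brack ν D) (hCD : C ⊆ D) : Brack ν C := by
  intro ε hε
  obtain ⟨T, h1, h2, h3⟩ := h ε hε
  exact ⟨T, h1, h2, fun S hS => h3 S (hCD hS)⟩

lemma Brack.compl {α : Type*} [MeasurableSpace α] [TopologicalSpace α] {ν : Measure α}
    {C : Set (Set α)} (h : Brack ν C) : Brack ν {S | Sᶜ ∈ C} := by
  intro ε hε
  obtain ⟨T, h1, h2, h3⟩ := h ε hε
  refine ⟨(fun p => (p.2ᶜ, p.1ᶜ)) '' T, h1.image _, ?_, ?_⟩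
  · rintro _ ⟨p, hp, rfl⟩
    obtain ⟨a, b, c, d, e⟩ := h2 p hp
    refine ⟨b.compl, a.compl, ?_, ?_, ?_⟩
    · simpa [frontier_compl] using d
    · simpa [frontier_compl] using c
    · have : p.1ᶜ \ p.2ᶜ = p.2 \ p.1 := by ext x; simp; tauto
      simpa only [this] using e
  · intro S hS
    obtain ⟨p, hp, a, b⟩ := h3 _ hS
    refine ⟨_, ⟨p, hp, rfl⟩, ?_, ?_⟩
    · exact Set.compl_subset_comm.1 b
    · exact Set.subset_compl_comm.1 a

lemma Brack.inter {α : Type*} [MeasurableSpace α] [TopologicalSpace α] {ν : Measure α}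
    [IsFiniteMeasure ν] {C D : Set (Set α)} (hC : Brack ν C) (hD : Brack ν D) :
    Brack ν {S | ∃ A ∈ C, ∃ B ∈ D, S = A ∩ B} := by
  intro ε hε
  obtain ⟨T, h1, h2, h3⟩ := hC (ε / 2) (by positivity)
  obtain ⟨T', h1', h2', h3'⟩ := hD (ε / 2) (by positivity)
  have fr : ∀ A B : Set α, ν (frontier A) = 0 → ν (frontier B) = 0 →
      ν (frontier (A ∩ B)) = 0 := by
    intro A B hA hB
    refine measure_mono_null (frontier_inter_subset A B) ?_
    exact measure_union_null (measure_mono_null Set.inter_subset_left hA)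
      (measure_mono_null Set.inter_subset_right hB)
  refine ⟨(fun q : (Set α × Set α) × (Set α × Set α) => (q.1.1 ∩ q.2.1, q.1.2 ∩ q.2.2)) ''
    (T ×ˢ T'), (h1.prod h1').image _, ?_, ?_⟩
  · rintro _ ⟨⟨p, q⟩, ⟨hp, hq⟩, rfl⟩
    obtain ⟨a, b, c, d, e⟩ := h2 p hp
    obtain ⟨a', b', c', d', e'⟩ := h2' q hq
    refine ⟨a.inter a', b.inter b', fr _ _ c c', fr _ _ d d', ?_⟩
    calc ν.real ((p.2 ∩ q.2) \ (p.1 ∩ q.1)) ≤ ν.real ((p.2 \ p.1) ∪ (q.2 \ q.1)) := by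
          refine measureReal_mono ?_ (measure_ne_top _ _)
          intro x; simp; tauto
      _ ≤ _ := measureReal_union_le _ _
      _ ≤ ε := by linarith
  · rintro S ⟨A, hA, B, hB, rfl⟩
    obtain ⟨p, hp, a, b⟩ := h3 _ hA
    obtain ⟨q, hq, a', b'⟩ := h3' _ hB
    exact ⟨_, ⟨(p, q), ⟨hp, hq⟩, rfl⟩, Set.inter_subset_inter a a', Set.inter_subset_inter b b'⟩

lemma Brack.comap {α β : Type*} [MeasurableSpace α] [TopologicalSpace α] [MeasurableSpace β]
    [TopologicalSpace β] [OpensMeasurableSpace β] {ν : Measure α} {f : α → β} (hf : Continuous f)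
    (hm : Measurable f) {C : Set (Set β)} (h : Brack (ν.map f) C) :
    Brack ν ((fun S => f ⁻¹' S) '' C) := by
  intro ε hε
  obtain ⟨T, h1, h2, h3⟩ := h ε hε
  refine ⟨(fun p => (f ⁻¹' p.1, f ⁻¹' p.2)) '' T, h1.image _, ?_, ?_⟩
  · rintro _ ⟨p, hp, rfl⟩
    obtain ⟨a, b, c, d, e⟩ := h2 p hp
    rw [Measure.map_apply hm isClosed_frontier.measurableSet] at c d
    rw [map_measureReal_apply hm (b.diff a)] at e
    exact ⟨hm a, hm b, measure_mono_null (hf.frontier_preimage_subset _) c,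
      measure_mono_null (hf.frontier_preimage_subset _) d, e⟩
  · rintro _ ⟨S, hS, rfl⟩
    obtain ⟨p, hp, a, b⟩ := h3 _ hS
    exact ⟨_, ⟨p, hp, rfl⟩, Set.preimage_mono a, Set.preimage_mono b⟩

lemma exists_lower (ρ : Measure ℝ) [IsProbabilityMeasure ρ] (hρ : ∀ a, ρ {a} = 0) (c : ℝ)
    (h0 : 0 ≤ c) (h1 : c ≤ 1) :
    ∃ E : Set ℝ, IsLowerSet E ∧ MeasurableSet E ∧ ρ (frontier E) = 0 ∧ ρ.real E = c := by
  rcases h0.eq_or_lt with rfl | h0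
  · exact ⟨∅, isLowerSet_empty, MeasurableSet.empty, by simp, by simp⟩
  rcases h1.eq_or_lt with rfl | h1
  · exact ⟨Set.univ, isLowerSet_univ, MeasurableSet.univ, by simp, by simp⟩
  have hc : Continuous (ProbabilityTheory.cdf ρ) := by
    rw [continuous_iff_continuousAt]
    intro a
    rw [(ProbabilityTheory.monotone_cdf ρ).continuousAt_iff_leftLim_eq_rightLim,
      StieltjesFunction.rightLim_eq]
    have := (ProbabilityTheory.cdf ρ).measure_singleton a
    rw [ProbabilityTheory.measure_cdf, hρ, eq_comm, ENNReal.ofReal_eq_zero] at this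
    exact le_antisymm ((ProbabilityTheory.monotone_cdf ρ).leftLim_le le_rfl) (by linarith)
  obtain ⟨a, ha⟩ : c ∈ Set.range (ProbabilityTheory.cdf ρ) := by
    apply mem_range_of_exists_le_of_exists_ge hc
    · exact (((ProbabilityTheory.tendsto_cdf_atBot ρ).eventually_lt_const h0).exists).imp
        fun _ h => h.le
    · exact (((ProbabilityTheory.tendsto_cdf_atTop ρ).eventually_const_lt h1).exists).imp
        fun _ h => h.le
  refine ⟨Set.Iic a, isLowerSet_Iic a, measurableSet_Iic, by simpa using hρ a, ?_⟩
  rw [← ProbabilityTheory.cdf_eq_real, ha]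

lemma exists_grid (ρ : Measure ℝ) [IsProbabilityMeasure ρ] (hρ : ∀ a, ρ {a} = 0) (K : ℕ) :
    ∃ F : ℕ → Set ℝ, F 0 = ∅ ∧ F (K + 1) = Set.univ ∧ (∀ k, IsLowerSet (F k)) ∧
      (∀ k, MeasurableSet (F k)) ∧ (∀ k, ρ (frontier (F k)) = 0) ∧
      ∀ k, k ≤ K + 1 → ρ.real (F k) = (k : ℝ) / ((K : ℝ) + 1) := by
  have key : ∀ k : ℕ, ∃ E : Set ℝ, IsLowerSet E ∧ MeasurableSet E ∧ ρ (frontier E) = 0 ∧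
      (k ≤ K + 1 → ρ.real E = k / (K + 1)) := by
    intro k
    by_cases hk : k ≤ K + 1
    · have hk' : (k : ℝ) ≤ K + 1 := by exact_mod_cast hk
      obtain ⟨E, a, b, c, d⟩ := exists_lower ρ hρ (k / (K + 1)) (by positivity)
        (by rw [div_le_one (by positivity)]; exact hk')
      exact ⟨E, a, b, c, fun _ => d⟩
    · exact ⟨∅, isLowerSet_empty, MeasurableSet.empty, by simp, fun h => absurd h hk⟩
  choose E hl hm hfr hv using key
  let F : ℕ → Set ℝ := fun k => if k = 0 then ∅ else if k = K + 1 then Set.univ else E k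
  have F0 : F 0 = ∅ := by simp [F]
  have F1 : F (K + 1) = Set.univ := by simp [F]
  have hl : ∀ k, IsLowerSet (F k) := by
    intro k; simp only [F]; split_ifs
    exacts [isLowerSet_empty, isLowerSet_univ, hl k]
  have hm : ∀ k, MeasurableSet (F k) := by
    intro k; simp only [F]; split_ifs
    exacts [MeasurableSet.empty, MeasurableSet.univ, hm k]
  have hfr : ∀ k, ρ (frontier (F k)) = 0 := by
    intro k; simp only [F]; split_ifs
    · simp
    · simp
    · exact hfr k
  have hv : ∀ k, k ≤ K + 1 → ρ.real (F k) = k / (K + 1) := by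
    intro k hk; simp only [F]; split_ifs with h h'
    · simp [h]
    · subst h'
      have : (K : ℝ) + 1 ≠ 0 := by positivity
      simp [this]
    · exact hv k hk
  exact ⟨F, F0, F1, hl, hm, hfr, hv⟩

lemma brack_lower (ρ : Measure ℝ) [IsProbabilityMeasure ρ] (hρ : ∀ a, ρ {a} = 0) :
    Brack ρ {S | IsLowerSet S} := by
  intro ε hε
  obtain ⟨K, hK⟩ := exists_nat_one_div_lt hε
  obtain ⟨F, F0, F1, hl, hm, hfr, hv⟩ := exists_grid ρ hρ K
  refine ⟨(fun k => (F k, F (k + 1))) '' Set.Iic K, (Set.finite_Iic K).image _, ?_, ?_⟩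
  · rintro _ ⟨k, hk, rfl⟩
    have hk : k ≤ K := hk
    refine ⟨hm _, hm _, hfr _, hfr _, ?_⟩
    have a := hv k (by omega)
    have b := hv (k + 1) (by omega)
    have hsub : F k ⊆ F (k + 1) := by
      rcases (hl k).total (hl (k + 1)) with h | h
      · exact h
      · exfalso
        have := measureReal_mono (μ := ρ) h
        rw [a, b, div_le_div_iff_of_pos_right (by positivity)] at this
        push_cast at this
        linarith
    simp only
    rw [measureReal_sdiff hsub (hm k), a, b, ← sub_div]
    push_cast
    simpa using hK.le
  · intro S hS
    classical
    have hS : IsLowerSet S := hS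
    by_cases hu : ∃ k, k ≤ K ∧ ¬ F (k + 1) ⊆ S
    · obtain ⟨a, b⟩ := Nat.find_spec hu
      refine ⟨_, ⟨Nat.find hu, a, rfl⟩, ?_, ?_⟩
      · rcases hn : Nat.find hu with _ | m
        · simp [F0]
        · have := Nat.find_min hu (m := m) (by omega)
          simp only [not_and, not_not] at this
          exact this (by omega)
      · exact (hS.total (hl _)).resolve_right b
    · push Not at hu
      have := hu K le_rfl
      refine ⟨_, ⟨K, Set.mem_Iic.2 le_rfl, rfl⟩, ?_, ?_⟩
      · rw [F1] at this; exact (Set.subset_univ _).trans this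
      · simp [F1]

lemma brack_ordConnected (ρ : Measure ℝ) [IsProbabilityMeasure ρ] (hρ : ∀ a, ρ {a} = 0) :
    Brack ρ {S | S.OrdConnected} := by
  refine ((brack_lower ρ hρ).compl.inter (brack_lower ρ hρ)).mono ?_
  intro S hS
  have hS : S.OrdConnected := hS
  refine ⟨upperClosure S, ?_, lowerClosure S, (lowerClosure S).lower,
    hS.upperClosure_inter_lowerClosure.symm⟩
  exact (upperClosure S).upper.compl

lemma marginal_null {d : ℕ} (ν : Measure (Fin d → ℝ)) [IsProbabilityMeasure ν]
    (hcdf : Continuous (mcdf ν)) (i : Fin d) (a : ℝ) : ν {x | x i = a} = 0 := by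
  have hsub : {x : Fin d → ℝ | x i = a} ⊆ ⋃ M : ℕ, {x | x i = a ∧ ∀ j, j ≠ i → x j ≤ M} := by
    intro x hx
    obtain ⟨M, hM⟩ := exists_nat_ge (∑ j, |x j|)
    simp only [Set.mem_iUnion]
    refine ⟨M, hx, fun j _ => (le_abs_self _).trans (le_trans ?_ hM)⟩
    exact Finset.single_le_sum (f := fun j => |x j|) (fun _ _ => abs_nonneg _) (Finset.mem_univ j)
  refine measure_mono_null hsub (measure_iUnion_null fun M => ?_)
  set t : ℝ → Fin d → ℝ := fun s => Function.update (fun _ => (M : ℝ)) i s with ht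
  have htc : Continuous t := continuous_const.update i continuous_id
  have hms : ∀ u : Fin d → ℝ, MeasurableSet {x : Fin d → ℝ | ∀ i, x i ≤ u i} := fun u =>
    measurableSet_Iic (a := u)
  have hle : ∀ s < a, ν.real {x | x i = a ∧ ∀ j, j ≠ i → x j ≤ M} ≤
      mcdf ν (t a) - mcdf ν (t s) := by
    intro s hs
    have : {x : Fin d → ℝ | ∀ j, x j ≤ t s j} ⊆ {x | ∀ j, x j ≤ t a j} := by
      intro x hx j
      refine (hx j).trans ?_
      by_cases hj : j = i
      · subst hj; simp [ht, hs.le]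
      · simp [ht, hj]
    change _ ≤ ν.real _ - ν.real _
    rw [← measureReal_sdiff this (hms _)]
    refine measureReal_mono ?_ (measure_ne_top _ _)
    rintro x ⟨hx, hx'⟩
    constructor
    · intro j
      by_cases hj : j = i
      · subst hj; simp [ht, hx]
      · simp [ht, hj, hx' j hj]
    · intro h
      have := h i
      simp [ht, hx] at this
      linarith
  have hlim : Tendsto (fun s => mcdf ν (t a) - mcdf ν (t s)) (𝓝[<] a) (𝓝 0) := by
    have h2 : Continuous fun s => mcdf ν (t a) - mcdf ν (t s) :=
      continuous_const.sub (hcdf.comp htc)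
    have := h2.tendsto a
    simp only [sub_self] at this
    exact this.mono_left nhdsWithin_le_nhds
  have h0 : ν.real {x | x i = a ∧ ∀ j, j ≠ i → x j ≤ M} ≤ 0 :=
    ge_of_tendsto hlim (by filter_upwards [self_mem_nhdsWithin] with s hs using hle s hs)
  exact (measureReal_eq_zero_iff).1 (le_antisymm h0 measureReal_nonneg)

lemma brack_rect {d : ℕ} (ν : Measure (Fin d → ℝ)) [IsProbabilityMeasure ν]
    (hcdf : Continuous (mcdf ν)) : Brack ν {R | IsRect R} := by
  have hone : ∀ i : Fin d, Brack ν ((fun S => (fun x : Fin d → ℝ => x i) ⁻¹' S) ''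
      {S : Set ℝ | S.OrdConnected}) := by
    intro i
    have hm : Measurable (fun x : Fin d → ℝ => x i) := measurable_pi_apply i
    have := Measure.isProbabilityMeasure_map (μ := ν) hm.aemeasurable
    refine Brack.comap (continuous_apply i) hm (brack_ordConnected _ fun a => ?_)
    rw [Measure.map_apply hm (measurableSet_singleton a)]
    exact marginal_null ν hcdf i a
  have hind : ∀ s : Finset (Fin d), Brack ν {R | ∃ I : Fin d → Set ℝ,
      (∀ i, (I i).OrdConnected) ∧ R = (s : Set (Fin d)).pi I} := by
    classical
    intro s
    induction s using Finset.induction_on with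
    | empty =>
      intro ε hε
      refine ⟨{(Set.univ, Set.univ)}, Set.finite_singleton _, ?_, ?_⟩
      · rintro _ rfl
        simp [hε.le]
      · rintro S ⟨I, -, rfl⟩
        exact ⟨_, rfl, by simp, by simp⟩
    | insert i s hi ih =>
      refine ((hone i).inter ih).mono ?_
      rintro S ⟨I, hI, rfl⟩
      refine ⟨_, ⟨I i, hI i, rfl⟩, _, ⟨I, hI, rfl⟩, ?_⟩
      rw [Finset.coe_insert, Set.insert_pi]
  refine (hind Finset.univ).mono ?_
  rintro S ⟨I, hI, rfl⟩
  exact ⟨I, hI, by simp⟩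

lemma Brack.unif {α : Type*} [MeasurableSpace α] [TopologicalSpace α] [OpensMeasurableSpace α]
    [HasOuterApproxClosed α] (μ : ℕ → Measure α) (hμ : ∀ n, IsProbabilityMeasure (μ n))
    (ν : Measure α) (hν : IsProbabilityMeasure ν) (hconv : TendstoInDist atTop μ ν)
    {C : Set (Set α)} (hC : Brack ν C) (ε : ℝ) (hε : 0 < ε) :
    ∀ᶠ n in atTop, ∀ S ∈ C, |(μ n).real S - ν.real S| ≤ ε := by
  have hset : ∀ A : Set α, ν (frontier A) = 0 →
      Tendsto (fun n => (μ n).real A) atTop (𝓝 (ν.real A)) := by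
    intro A hA
    have h1 : Tendsto (fun n => show ProbabilityMeasure α from ⟨μ n, hμ n⟩) atTop
        (𝓝 (show ProbabilityMeasure α from ⟨ν, hν⟩)) := by
      rw [ProbabilityMeasure.tendsto_iff_forall_integral_tendsto]
      exact hconv
    have h2 := ProbabilityMeasure.tendsto_measure_of_null_frontier_of_tendsto' h1 (E := A) hA
    exact (ENNReal.tendsto_toReal (measure_ne_top ν A)).comp h2
  obtain ⟨T, h1, h2, h3⟩ := hC (ε / 2) (by positivity)
  have hev : ∀ᶠ n in atTop, ∀ p ∈ T, |(μ n).real p.1 - ν.real p.1| < ε / 2 ∧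
      |(μ n).real p.2 - ν.real p.2| < ε / 2 := by
    rw [eventually_all_finite h1]
    intro p hp
    obtain ⟨a, b, c, d, e⟩ := h2 p hp
    have hc := Metric.tendsto_nhds.1 (hset _ c) (ε / 2) (by positivity)
    have hd := Metric.tendsto_nhds.1 (hset _ d) (ε / 2) (by positivity)
    filter_upwards [hc, hd] with n hc hd
    exact ⟨by simpa [Real.dist_eq] using hc, by simpa [Real.dist_eq] using hd⟩
  filter_upwards [hev] with n hn S hS
  obtain ⟨p, hp, a, b⟩ := h3 S hS
  obtain ⟨ma, mb, -, -, e⟩ := h2 p hp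
  obtain ⟨u, v⟩ := hn p hp
  rw [measureReal_sdiff (a.trans b) ma] at e
  have i1 := measureReal_mono (μ := μ n) a
  have i2 := measureReal_mono (μ := μ n) b
  have i3 := measureReal_mono (μ := ν) a
  have i4 := measureReal_mono (μ := ν) b
  rw [abs_lt] at u v
  rw [abs_le]
  constructor <;> linarith

/-- Lemma A.7, multivariate Polya theorem: if `X_n → X` in distribution
in `ℝ^d` and `X` has a continuous cdf, then the multivariate cdfs converge uniformly,
and consequently the KS distance over axis-aligned rectangles tends to 0. -/
theorem statement11 {d : ℕ}
    (μ : ℕ → Measure (Fin d → ℝ)) (hμ : ∀ n, IsProbabilityMeasure (μ n))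
    (ν : Measure (Fin d → ℝ)) (hν : IsProbabilityMeasure ν)
    (hconv : TendstoInDist atTop μ ν)
    (hcdf : Continuous (mcdf ν)) :
    TendstoUniformly (fun n => mcdf (μ n)) (mcdf ν) atTop
    ∧ Tendsto (fun n => ksDist (μ n) ν) atTop (𝓝 0) := by
  have hU := Brack.unif μ hμ ν hν hconv (brack_rect ν hcdf)
  constructor
  · rw [Metric.tendstoUniformly_iff]
    intro ε hε
    filter_upwards [hU (ε / 2) (by positivity)] with n hn t
    have hr : IsRect {x : Fin d → ℝ | ∀ i, x i ≤ t i} :=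
      ⟨fun i => Set.Iic (t i), fun i => Set.ordConnected_Iic, by ext x; simp [Pi.le_def]⟩
    have := hn _ hr
    rw [dist_comm, Real.dist_eq]
    exact lt_of_le_of_lt this (by linarith)
  · rw [Metric.tendsto_nhds]
    intro ε hε
    filter_upwards [hU (ε / 2) (by positivity)] with n hn
    have h1 : ksDist (μ n) ν ≤ ε / 2 := Real.iSup_le (fun R => hn R.1 R.2) (by positivity)
    have h0 : 0 ≤ ksDist (μ n) ν := Real.iSup_nonneg fun _ => abs_nonneg _
    rw [Real.dist_eq, sub_zero, abs_of_nonneg h0]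
    linarith
end

section
/- If a mechanism M satisfies ε-DP, i.e. P(M(x) ∈ S) ≤ e^ε P(M(x') ∈ S) for all measurable S and all neighboring datasets x, x', then M satisfies (0, (e^ε − 1)/(e^ε + 1))-DP; that is, for all neighboring x, x', the total variation distance between the distributions of M(x) and M(x') is at most (e^ε − 1)/(e^ε + 1). -/
open MeasureTheory Filter Topology
open scoped ENNReal

/-- Lemma A.11, part 2: if `P` and `Q` satisfy the `ε`-DP constraint
(`P(S) ≤ e^ε Q(S)` and `Q(S) ≤ e^ε P(S)` for all measurable `S`), then
`TV(P, Q) ≤ (e^ε − 1)/(e^ε + 1)`. -/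
theorem statement14 {α : Type*} [MeasurableSpace α]
    (P Q : Measure α) (hP : IsProbabilityMeasure P) (hQ : IsProbabilityMeasure Q)
    (ε : ℝ)
    (hDP : ∀ S : Set α, MeasurableSet S →
      P S ≤ ENNReal.ofReal (Real.exp ε) * Q S ∧
      Q S ≤ ENNReal.ofReal (Real.exp ε) * P S) :
    tvDist P Q ≤ (Real.exp ε - 1) / (Real.exp ε + 1) := by
  have hE := Real.exp_pos ε
  have key : ∀ S : Set α, MeasurableSet S →
      P.real S ≤ Real.exp ε * Q.real S ∧ Q.real S ≤ Real.exp ε * P.real S := by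
    intro S hS
    obtain ⟨h1, h2⟩ := hDP S hS
    constructor
    · have := ENNReal.toReal_mono
        (ENNReal.mul_ne_top ENNReal.ofReal_ne_top (measure_ne_top Q S)) h1
      rwa [ENNReal.toReal_mul, ENNReal.toReal_ofReal hE.le] at this
    · have := ENNReal.toReal_mono
        (ENNReal.mul_ne_top ENNReal.ofReal_ne_top (measure_ne_top P S)) h2
      rwa [ENNReal.toReal_mul, ENNReal.toReal_ofReal hE.le] at this
  unfold tvDist
  haveI : Nonempty {S : Set α // MeasurableSet S} := ⟨⟨∅, MeasurableSet.empty⟩⟩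
  refine ciSup_le ?_
  rintro ⟨S, hS⟩
  change |P.real S - Q.real S| ≤ _
  obtain ⟨h1, h2⟩ := key S hS
  obtain ⟨h3, h4⟩ := key Sᶜ hS.compl
  rw [probReal_compl_eq_one_sub hS, probReal_compl_eq_one_sub hS] at h3 h4
  rw [le_div_iff₀ (by positivity)]
  rcases abs_cases (P.real S - Q.real S) with ⟨h, _⟩ | ⟨h, _⟩ <;> rw [h] <;> nlinarith
end

section
/- If a mechanism M satisfies (ε,δ)-DP, i.e. P(M(x) ∈ S) ≤ e^ε P(M(x') ∈ S) + δ for all measurable S and all neighboring datasets x, x', then M satisfies (0, (2δ + e^ε − 1)/(e^ε + 1))-DP; that is, the total variation distance between the output distributions of M on any pair of neighboring datasets is at most (2δ + e^ε − 1)/(e^ε + 1). -/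
open MeasureTheory Filter Topology
open scoped ENNReal

/-- Lemma A.11, part 3: if `P` and `Q` satisfy the `(ε,δ)`-DP constraint
(`P(S) ≤ e^ε Q(S) + δ` and `Q(S) ≤ e^ε P(S) + δ` for all measurable `S`), then
`TV(P, Q) ≤ (2δ + e^ε − 1)/(e^ε + 1)`. -/
theorem statement15 {α : Type*} [MeasurableSpace α]
    (P Q : Measure α) (hP : IsProbabilityMeasure P) (hQ : IsProbabilityMeasure Q)
    (ε δ : ℝ) (hδ : 0 ≤ δ)
    (hDP : ∀ S : Set α, MeasurableSet S →
      P S ≤ ENNReal.ofReal (Real.exp ε) * Q S + ENNReal.ofReal δ ∧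
      Q S ≤ ENNReal.ofReal (Real.exp ε) * P S + ENNReal.ofReal δ) :
    tvDist P Q ≤ (2 * δ + Real.exp ε - 1) / (Real.exp ε + 1) := by
  have key : ∀ S : Set α, MeasurableSet S →
      P.real S ≤ Real.exp ε * Q.real S + δ ∧ Q.real S ≤ Real.exp ε * P.real S + δ := by
    have conv : ∀ a b : ℝ≥0∞, b ≠ ∞ →
        a ≤ ENNReal.ofReal (Real.exp ε) * b + ENNReal.ofReal δ →
        a.toReal ≤ Real.exp ε * b.toReal + δ := by
      intro a b hb h
      have hm : ENNReal.ofReal (Real.exp ε) * b ≠ ∞ := ENNReal.mul_ne_top ENNReal.ofReal_ne_top hb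
      have h2 := ENNReal.toReal_mono (ENNReal.add_ne_top.2 ⟨hm, ENNReal.ofReal_ne_top⟩) h
      rwa [ENNReal.toReal_add hm ENNReal.ofReal_ne_top, ENNReal.toReal_mul,
        ENNReal.toReal_ofReal (Real.exp_pos ε).le, ENNReal.toReal_ofReal hδ] at h2
    intro S hS
    exact ⟨conv _ _ (measure_ne_top Q S) (hDP S hS).1, conv _ _ (measure_ne_top P S) (hDP S hS).2⟩
  have : Nonempty {S : Set α // MeasurableSet S} := ⟨⟨∅, MeasurableSet.empty⟩⟩
  refine ciSup_le fun ⟨S, hS⟩ => ?_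
  change |P.real S - Q.real S| ≤ _
  have h1 := key S hS
  have h2 := key Sᶜ hS.compl
  rw [probReal_compl_eq_one_sub hS, probReal_compl_eq_one_sub hS] at h2
  obtain ⟨h1, h1'⟩ := h1
  obtain ⟨h2, h2'⟩ := h2
  rw [le_div_iff₀ (by positivity)]
  rcases abs_cases (P.real S - Q.real S) with ⟨h, _⟩ | ⟨h, _⟩ <;> rw [h] <;> linarith
end

section
/- Let p(s|x) be the distribution of a (0,δ)-DP privacy mechanism on datasets (meaning the total variation distance between its output distributions on any two datasets differing by the addition or removal of one record is at most δ), and let p(x|θ,n) be the distribution of a dataset consisting of n i.i.d. records. Then for any two sample sizes n and m, the total variation distance between the marginal distributions of the output satisfies TV(p(s|θ,n), p(s|θ,m)) ≤ δ |n − m|. -/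
open MeasureTheory Filter Topology
open scoped ENNReal

/-- Lemma A.14: if the mechanism `M` is `(0,δ)`-DP (its output laws on
datasets differing by addition/removal of one record are within TV distance `δ`), and
`p(x|θ,n)` is the law of `n` i.i.d. records, then for any two sample sizes `n, m`,
`TV(p(s|θ,n), p(s|θ,m)) ≤ δ |n − m|`. -/
theorem statement16 {𝒳 Θ : Type*} [MeasurableSpace 𝒳] {d : ℕ}
    (M : (n : ℕ) → (Fin n → 𝒳) → Measure (Fin d → ℝ))
    (hM : ∀ n x, IsProbabilityMeasure (M n x))
    (hMmeas : ∀ n, Measurable (M n))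
    (δ : ℝ) (hδ : 0 ≤ δ)
    (hDP : ∀ n (x : Fin (n + 1) → 𝒳) (i : Fin (n + 1)),
      tvDist (M (n + 1) x) (M n (x ∘ i.succAbove)) ≤ δ)
    (Q : Θ → Measure 𝒳) (hQ : ∀ θ, IsProbabilityMeasure (Q θ)) :
    ∀ (θ : Θ) (n m : ℕ),
      tvDist ((Measure.pi fun _ : Fin n => Q θ).bind (M n))
        ((Measure.pi fun _ : Fin m => Q θ).bind (M m)) ≤ δ * |(n : ℝ) - (m : ℝ)| := by
  classical
  intro θ n m
  have hQθ := hQ θ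
  have key : ∀ (S : Set (Fin d → ℝ)), MeasurableSet S → ∀ n x (i : Fin (n+1)),
      |(M (n+1) x S).toReal - (M n (x ∘ i.succAbove) S).toReal| ≤ δ := by
    intro S hS n x i
    refine le_trans ?_ (hDP n x i)
    have h1 := hM (n+1) x
    have h2 := hM n (x ∘ i.succAbove)
    refine le_ciSup (f := fun S : {S : Set (Fin d → ℝ) // MeasurableSet S} =>
      |(M (n+1) x S.1).toReal - (M n (x ∘ i.succAbove) S.1).toReal|) ?_ ⟨S, hS⟩
    refine ⟨1, ?_⟩
    rintro _ ⟨T, rfl⟩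
    have a1 : (M (n+1) x T.1).toReal ≤ 1 := measureReal_le_one (μ := M (n+1) x)
    have a2 : (M n (x ∘ i.succAbove) T.1).toReal ≤ 1 :=
      measureReal_le_one (μ := M n (x ∘ i.succAbove))
    have b1 : 0 ≤ (M (n+1) x T.1).toReal := ENNReal.toReal_nonneg
    have b2 : 0 ≤ (M n (x ∘ i.succAbove) T.1).toReal := ENNReal.toReal_nonneg
    exact abs_le.2 ⟨by linarith, by linarith⟩
  have hne : Nonempty {S : Set (Fin d → ℝ) // MeasurableSet S} := ⟨⟨∅, MeasurableSet.empty⟩⟩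
  refine ciSup_le ?_
  rintro ⟨S, hS⟩
  have hmeas : ∀ n, Measurable fun x => (M n x S).toReal := fun n =>
    ((Measure.measurable_coe hS).comp (hMmeas n)).ennreal_toReal
  have hint : ∀ n (μ : Measure (Fin n → 𝒳)) [IsProbabilityMeasure μ],
      Integrable (fun x => (M n x S).toReal) μ := by
    intro n μ _
    refine Integrable.of_bound (hmeas n).aestronglyMeasurable 1 (ae_of_all _ fun x => ?_)
    have := hM n x
    rw [Real.norm_of_nonneg ENNReal.toReal_nonneg]
    exact measureReal_le_one (μ := M n x)
  have hrep : ∀ n, (((Measure.pi fun _ : Fin n => Q θ).bind (M n)) S).toReal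
      = ∫ x, (M n x S).toReal ∂(Measure.pi fun _ : Fin n => Q θ) := by
    intro n
    rw [Measure.bind_apply hS (hMmeas n).aemeasurable, integral_toReal]
    · exact ((Measure.measurable_coe hS).comp (hMmeas n)).aemeasurable
    · refine ae_of_all _ fun x => ?_
      have := hM n x
      exact measure_lt_top _ _
  have hmp : ∀ n, MeasurePreserving (fun x : Fin (n+1) → 𝒳 => x ∘ (0 : Fin (n+1)).succAbove)
      (Measure.pi fun _ : Fin (n+1) => Q θ) (Measure.pi fun _ : Fin n => Q θ) := by
    intro n
    have h1 := measurePreserving_piFinSuccAbove (fun _ : Fin (n+1) => Q θ) 0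
    exact (measurePreserving_snd (μ := Q θ) (ν := Measure.pi fun _ : Fin n => Q θ)).comp h1
  set a : ℕ → ℝ := fun n => (((Measure.pi fun _ : Fin n => Q θ).bind (M n)) S).toReal with ha
  have step : ∀ n, |a (n+1) - a n| ≤ δ := by
    intro n
    have e : a n = ∫ x, (M n (x ∘ (0 : Fin (n+1)).succAbove) S).toReal
        ∂(Measure.pi fun _ : Fin (n+1) => Q θ) := by
      simp only [ha]
      rw [hrep n, ← (hmp n).map_eq, integral_map (hmp n).measurable.aemeasurable
        (hmeas n).aestronglyMeasurable]
    have hi : Integrable (fun x => (M n (x ∘ (0 : Fin (n+1)).succAbove) S).toReal)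
        (Measure.pi fun _ : Fin (n+1) => Q θ) :=
      (hmp n).integrable_comp_of_integrable (hint n _)
    have e1 : a (n+1) = _ := hrep (n+1)
    rw [e, e1, ← integral_sub (hint (n+1) _) hi, ← Real.norm_eq_abs]
    refine (norm_integral_le_of_norm_le_const (C := δ) (ae_of_all _ fun x => ?_)).trans ?_
    · exact key S hS n x 0
    · simp
  have tele : ∀ n k, |a (n+k) - a n| ≤ δ * k := by
    intro n k
    induction k with
    | zero => simp
    | succ k ih =>
      have := abs_sub_le (a (n+(k+1))) (a (n+k)) (a n)
      have h2 := step (n+k)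
      rw [← add_assoc] at *
      push_cast
      linarith
  show |a n - a m| ≤ _
  rcases le_total n m with h | h
  · obtain ⟨k, rfl⟩ := Nat.exists_eq_add_of_le h
    rw [abs_sub_comm]
    refine (tele n k).trans_eq ?_
    push_cast
    simp
  · obtain ⟨k, rfl⟩ := Nat.exists_eq_add_of_le h
    refine (tele m k).trans_eq ?_
    push_cast
    simp
end

section
/- For every ε > 0 and every integer n0 ≥ 1, the normalized discrete-Gaussian first absolute moment satisfies (Σ_{k=1}^∞ |k − n0| exp(−(ε²/2)(k − n0)²)) / (Σ_{k=1}^∞ exp(−(ε²/2)(k − n0)²)) ≤ 2/ε. Equivalently, if p(n | n_dp = n0) ∝ exp(−(ε²/2)(n − n0)²) on n ∈ {1,2,...}, then E_{n | n_dp = n0} |n − n0| ≤ 2/ε, and this bound tends to 0 as ε → ∞. -/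
open Filter Topology

lemma gw_half (ε : ℝ) (hε : 0 < ε) (w : ℝ → ℝ)
    (hw : w = fun x => Real.exp (-(ε ^ 2 / 2 * x ^ 2))) (M : ℕ) :
    2 * ε * ∑ j ∈ Finset.range M, ((j : ℝ) + 1) * w ((j : ℝ) + 1) ≤
      3 * ∑ j ∈ Finset.range M, w ((j : ℝ) + 1) + 1 - w M - M * w M := by
  induction M with
  | zero => simp [hw]
  | succ M ih =>
    rw [Finset.sum_range_succ, Finset.sum_range_succ]
    have hM : (0 : ℝ) ≤ M := Nat.cast_nonneg M
    have hp : 0 < w ((M : ℝ) + 1) := by rw [hw]; exact Real.exp_pos _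
    have h1 : w M = w ((M : ℝ) + 1) * Real.exp (ε ^ 2 / 2 * (2 * M + 1)) := by
      rw [hw]; simp only; rw [← Real.exp_add]; congr 1; ring
    have h2 := Real.add_one_le_exp (ε ^ 2 / 2 * (2 * (M : ℝ) + 1))
    have h3 : w ((M : ℝ) + 1) * (ε ^ 2 / 2 * (2 * (M : ℝ) + 1) + 1) ≤ w M := by
      rw [h1]; exact mul_le_mul_of_nonneg_left h2 hp.le
    have h4 : 2 * ε * ((M : ℝ) + 1) ≤
        2 + ((M : ℝ) + 1) * (ε ^ 2 / 2 * (2 * (M : ℝ) + 1)) := by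
      nlinarith [sq_nonneg (ε * ((M : ℝ) + 1) - 2), mul_nonneg (mul_nonneg hM (sq_nonneg ε)) (by linarith : (0 : ℝ) ≤ M + 1)]
    have h5 := mul_le_mul_of_nonneg_left h4 hp.le
    have h6 := mul_le_mul_of_nonneg_left h3 (by linarith : (0 : ℝ) ≤ M + 1)
    push_cast
    nlinarith

lemma sum_reflect_aux (φ : ℝ → ℝ) (hφ : ∀ x, φ (-x) = φ x) (m : ℕ) :
    ∑ k ∈ Finset.range m, φ ((k : ℝ) - m) = ∑ j ∈ Finset.range m, φ ((j : ℝ) + 1) := by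
  induction m with
  | zero => simp
  | succ m ih =>
    rw [Finset.sum_range_succ', Finset.sum_range_succ, ← ih]
    congr 1
    · refine Finset.sum_congr rfl fun k _ => ?_
      congr 1; push_cast; ring
    · rw [← hφ]; congr 1; push_cast; ring

lemma sum_split_aux (φ : ℝ → ℝ) (hφ : ∀ x, φ (-x) = φ x) (m M : ℕ) :
    ∑ k ∈ Finset.range (m + 1 + M), φ ((k : ℝ) - m) =
      ∑ j ∈ Finset.range m, φ ((j : ℝ) + 1) + φ 0 + ∑ j ∈ Finset.range M, φ ((j : ℝ) + 1) := by
  rw [Finset.sum_range_add, Finset.sum_range_succ, sum_reflect_aux φ hφ, sub_self]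
  congr 1
  refine Finset.sum_congr rfl fun k _ => ?_
  congr 1; push_cast; ring

lemma tsum_shift_aux (f : ℕ → ℝ) :
    ∑' k : {k : ℕ // 1 ≤ k}, f k.1 = ∑' k : ℕ, f (k + 1) := by
  let e : ℕ ≃ {k : ℕ // 1 ≤ k} :=
    { toFun := fun k => ⟨k + 1, by omega⟩
      invFun := fun k => k.1 - 1
      left_inv := fun k => by simp
      right_inv := fun k => by
        have := k.2
        apply Subtype.ext
        simp only
        omega }
  exact (e.tsum_eq (fun k : {k : ℕ // 1 ≤ k} => f k.1)).symm

lemma main_aux (ε : ℝ) (hε : 0 < ε) (m : ℕ) (w : ℝ → ℝ)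
    (hw : w = fun x => Real.exp (-(ε ^ 2 / 2 * x ^ 2))) :
    (∑' k : ℕ, |(k : ℝ) - m| * w ((k : ℝ) - m)) / (∑' k : ℕ, w ((k : ℝ) - m)) ≤ 2 / ε := by
  have hpos : ∀ x, 0 < w x := fun x => by rw [hw]; exact Real.exp_pos _
  have hs : Summable fun k : ℕ => w ((k : ℝ) - m) := by
    have h := (Real.summable_exp_nat_mul_iff (a := -ε ^ 2)).2 (by nlinarith [pow_pos hε 2])
    refine Summable.of_nonneg_of_le (fun k => (hpos _).le) (fun k => ?_)
      (h.mul_left (Real.exp (ε ^ 2 / 2 * (2 * m + 1))))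
    rw [hw, ← Real.exp_add]
    simp only
    apply Real.exp_le_exp.2
    nlinarith [mul_nonneg (sq_nonneg ε) (sq_nonneg ((k : ℝ) - m - 1))]
  have hD : 0 < ∑' k : ℕ, w ((k : ℝ) - m) := hs.tsum_pos (fun k => (hpos _).le) 0 (hpos _)
  rw [div_le_iff₀ hD]
  have hnn : ∀ k : ℕ, 0 ≤ |(k : ℝ) - m| * w ((k : ℝ) - m) :=
    fun k => mul_nonneg (abs_nonneg _) (hpos _).le
  apply Real.tsum_le_of_sum_range_le hnn
  intro N
  have heven : ∀ x, w (-x) = w x := fun x => by rw [hw]; simp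
  have a1 : ∑ k ∈ Finset.range N, |(k : ℝ) - m| * w ((k : ℝ) - m) ≤
      ∑ k ∈ Finset.range (m + 1 + N), |(k : ℝ) - m| * w ((k : ℝ) - m) :=
    Finset.sum_le_sum_of_subset_of_nonneg
      (Finset.range_mono (by omega)) (fun k _ _ => hnn k)
  have a2 : ∑ k ∈ Finset.range (m + 1 + N), w ((k : ℝ) - m) ≤ ∑' k : ℕ, w ((k : ℝ) - m) :=
    hs.sum_le_tsum _ (fun k _ => (hpos _).le)
  have b1 := sum_split_aux (fun x => |x| * w x) (fun x => by simp [heven]) m N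
  have b2 := sum_split_aux w heven m N
  have c1 := gw_half ε hε w hw m
  have c2 := gw_half ε hε w hw N
  have e1 : ∀ M : ℕ, ∑ j ∈ Finset.range M, |(j : ℝ) + 1| * w ((j : ℝ) + 1) =
      ∑ j ∈ Finset.range M, ((j : ℝ) + 1) * w ((j : ℝ) + 1) := fun M =>
    Finset.sum_congr rfl fun j _ => by rw [abs_of_nonneg (by positivity)]
  simp only [abs_zero, zero_mul, e1] at b1
  have w0 : w 0 = 1 := by rw [hw]; simp
  have d : ∀ M : ℕ, 0 ≤ w M + M * w M := fun M =>
    add_nonneg (hpos _).le (mul_nonneg (Nat.cast_nonneg M) (hpos _).le)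
  have dn : ∀ M : ℕ, 0 ≤ ∑ j ∈ Finset.range M, w ((j : ℝ) + 1) := fun M =>
    Finset.sum_nonneg fun j _ => (hpos _).le
  refine a1.trans (le_trans ?_ (mul_le_mul_of_nonneg_left a2 (by positivity)))
  rw [b1, b2, w0, div_mul_eq_mul_div, le_div_iff₀ hε]
  linarith [d m, d N, dn m, dn N]

/-- Lemma A.12, part 2: for every `ε > 0` and integer `n0 ≥ 1`, the
normalized discrete-Gaussian first absolute moment satisfies
`(∑_{k ≥ 1} |k − n0| e^{−(ε²/2)(k − n0)²}) / (∑_{k ≥ 1} e^{−(ε²/2)(k − n0)²}) ≤ 2/ε`;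
i.e. if `p(n | n_dp = n0) ∝ exp(−(ε²/2)(n − n0)²)` on `{1,2,...}`, then
`E_{n | n_dp = n0}|n − n0| ≤ 2/ε`; moreover this bound tends to 0 as `ε → ∞`. -/
theorem statement18 :
    (∀ ε : ℝ, 0 < ε → ∀ n0 : ℕ, 1 ≤ n0 →
      (∑' k : {k : ℕ // 1 ≤ k},
          |(k.1 : ℝ) - (n0 : ℝ)| * Real.exp (-(ε ^ 2 / 2 * ((k.1 : ℝ) - (n0 : ℝ)) ^ 2))) /
        (∑' k : {k : ℕ // 1 ≤ k},
          Real.exp (-(ε ^ 2 / 2 * ((k.1 : ℝ) - (n0 : ℝ)) ^ 2)))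
        ≤ 2 / ε)
    ∧ Tendsto (fun ε : ℝ => 2 / ε) atTop (𝓝 0) := by
  refine ⟨fun ε hε n0 hn0 => ?_, tendsto_const_nhds.div_atTop tendsto_id⟩
  obtain ⟨m, rfl⟩ : ∃ m, n0 = m + 1 := ⟨n0 - 1, by omega⟩
  have h := main_aux ε hε m _ rfl
  rw [tsum_shift_aux (fun k : ℕ => |(k : ℝ) - ((m + 1 : ℕ) : ℝ)| *
      Real.exp (-(ε ^ 2 / 2 * ((k : ℝ) - ((m + 1 : ℕ) : ℝ)) ^ 2))),
    tsum_shift_aux (fun k : ℕ =>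
      Real.exp (-(ε ^ 2 / 2 * ((k : ℝ) - ((m + 1 : ℕ) : ℝ)) ^ 2)))]
  simpa only [Nat.cast_add, Nat.cast_one, add_sub_add_right_eq_sub] using h
end
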